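/- If P_1, ..., P_n are n-dimensional lattice polytopes in R^n, then MV(P_1,...,P_n) = 1 + sum over nonempty subsets I of [n] of (-1)^(n-|I|) times the number of interior lattice points of the Minkowski sum P_I. -/

import Mathlib

open scoped Pointwise
open MeasureTheory Finset

def IsLatticePt {n : ℕ} (x : Fin n → ℝ) : Prop := ∀ i, ∃ z : ℤ, x i = (z : ℝ)

def IsLatticePolytope {n : ℕ} (P : Set (Fin n → ℝ)) : Prop :=
  ∃ V : Finset (Fin n → ℝ), V.Nonempty ∧ (∀ v ∈ V, IsLatticePt v) ∧
    P = convexHull ℝ (V : Set (Fin n → ℝ))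

noncomputable def adim {n : ℕ} (A : Set (Fin n → ℝ)) : ℕ :=
  Module.finrank ℝ (affineSpan ℝ A).direction

def relintLat {n : ℕ} (A : Set (Fin n → ℝ)) : Set (Fin n → ℝ) :=
  {x ∈ intrinsicInterior ℝ A | IsLatticePt x}

def intLat {n : ℕ} (A : Set (Fin n → ℝ)) : Set (Fin n → ℝ) :=
  {x ∈ interior A | IsLatticePt x}

noncomputable def mixedVol {n m : ℕ} (P : Fin m → Set (Fin n → ℝ)) : ℝ :=
  ∑ I : Finset (Fin m), (-1 : ℝ) ^ (m - I.card) * (volume (∑ i ∈ I, P i)).toReal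

/-!
Put a copy of `P i` at height `e_i` in `ℝⁿ × ℝⁿ` and take the cone over all of them: its slice at
height `l` is `∑ i, l i • P i`. A generic weight on the generators triangulates the cone, and a
generic vector `q` turns the triangulation into a disjoint union of half-open simplicial cones. Each
of these is tiled by translates of a half-open box, which makes the number of lattice points of
`∑ i, l i • P i` a polynomial `F l` of degree at most `n`. Replacing `q` by `-q` exchanges the open
and closed facets: one choice describes the cone, the other its interior, and for the boxes the
exchange is `x ↦ 1 - x` on coordinates. Hence `(-1) ^ n * F (-l)` counts the interior lattice points
of `∑ i, l i • P i` as soon as this polytope is full-dimensional.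

The alternating sum of `F (s • 1_I)` over all `I ⊆ [n]` is `s ^ n` times the coefficient of
`x₁ ⋯ xₙ` in `F`. As `s → ∞` this identifies the coefficient with the mixed volume, and at `s = -1`
with the alternating sum of interior lattice points, where `I = ∅` contributes `F 0 = 1`.
-/

open Filter Topology

section GenericVectors

theorem exists_mem_forall_notMem_submodule {V κ : Type*} [NormedAddCommGroup V] [NormedSpace ℝ V]
    [FiniteDimensional ℝ V] [Finite κ] {S : κ → Submodule ℝ V} (hS : ∀ k, S k ≠ ⊤)
    {O : Set V} (hO : IsOpen O) (hne : O.Nonempty) : ∃ x ∈ O, ∀ k, x ∉ S k := by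
  have := FiniteDimensional.complete ℝ V
  have hdense : ∀ k, Dense (S k : Set V)ᶜ := fun k ↦
    interior_eq_empty_iff_dense_compl.1 <| Set.not_nonempty_iff_eq_empty.1 fun h ↦
      hS k ((S k).eq_top_of_nonempty_interior' h)
  obtain ⟨x, hxO, hx⟩ := (dense_iInter_of_isOpen
    (fun k ↦ (S k).closed_of_finiteDimensional.isOpen_compl) hdense).exists_mem_open hO hne
  exact ⟨x, hx, fun k ↦ Set.mem_iInter.1 hxO k⟩

variable {ι E : Type*} [AddCommGroup E] [Module ℝ E]

/-- A vector is generic for the family `U` if it lies on no proper subspace spanned by members of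
`U`. -/
def IsGenericVector (U : ι → E) (y : E) : Prop :=
  ∀ T : Set ι, y ∈ Submodule.span ℝ (U '' T) → Submodule.span ℝ (U '' T) = ⊤

theorem IsGenericVector.neg {U : ι → E} {y : E} (hy : IsGenericVector U y) :
    IsGenericVector U (-y) :=
  fun T hT ↦ hy T (neg_mem_iff.1 hT)

theorem IsGenericVector.repr_ne_zero {U : ι → E} {y : E} (hy : IsGenericVector U y) {B : Set ι}
    (b : Module.Basis B ℝ E) (hb : ∀ u, b u = U u) (u : B) : b.repr y u ≠ 0 := by
  intro h0
  have himage : U '' (B \ {(u : ι)}) = b '' {u}ᶜ := by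
    ext x
    simp only [Set.mem_image, Set.mem_sdiff, Set.mem_singleton_iff, Set.mem_compl_iff,
      Subtype.exists, hb, Subtype.ext_iff]
    grind
  have hspan := hy (B \ {(u : ι)}) <| by
    rw [himage, b.mem_span_image]
    intro v hv huv
    rw [Set.mem_singleton_iff] at huv
    simp [huv, h0] at hv
  have hu : b u ∈ Submodule.span ℝ (b '' {u}ᶜ) := himage ▸ hspan ▸ Submodule.mem_top
  have := b.mem_span_image.1 hu
  simp at this

theorem IsGenericVector.eventually_add_smul [Finite ι] {U : ι → E} {s : E}
    (hs : IsGenericVector U s) (z : E) : ∀ᶠ t : ℝ in 𝓝[>] 0, IsGenericVector U (z + t • s) := by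
  suffices h : ∀ T : Set ι, ∀ᶠ t : ℝ in 𝓝[>] 0,
      z + t • s ∈ Submodule.span ℝ (U '' T) → Submodule.span ℝ (U '' T) = ⊤ from
    eventually_all.2 h
  intro T
  by_cases hT : Submodule.span ℝ (U '' T) = ⊤
  · simp [hT]
  have hsub : {t : ℝ | z + t • s ∈ Submodule.span ℝ (U '' T)}.Subsingleton := by
    rintro t (ht : z + t • s ∈ Submodule.span ℝ (U '' T))
      t' (ht' : z + t' • s ∈ Submodule.span ℝ (U '' T))
    by_contra hne
    have hmem : (t - t') • s ∈ Submodule.span ℝ (U '' T) := by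
      simpa [sub_smul] using Submodule.sub_mem _ ht ht'
    exact hT (hs T ((Submodule.smul_mem_iff _ (sub_ne_zero.2 hne)).1 hmem))
  filter_upwards [(nhdsGT_le_nhdsNE 0).trans (nhdsNE_le_cofinite 0)
    hsub.finite.compl_mem_cofinite] with t ht hmem using absurd hmem ht

theorem exists_pos_isGenericVector_sum [Fintype ι] {U : ι → E}
    (hU : Submodule.span ℝ (Set.range U) = ⊤) :
    ∃ a : ι → ℝ, (∀ u, 0 < a u) ∧ IsGenericVector U (∑ u, a u • U u) := by
  have hsurj : Function.Surjective (Fintype.linearCombination ℝ U) := by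
    rw [← LinearMap.range_eq_top, Fintype.range_linearCombination, hU]
  obtain ⟨a, hpos, ha⟩ := exists_mem_forall_notMem_submodule
    (S := fun T : {T : Set ι // Submodule.span ℝ (U '' T) ≠ ⊤} ↦
      (Submodule.span ℝ (U '' T)).comap (Fintype.linearCombination ℝ U))
    (fun T hT ↦ T.2 <| Submodule.comap_injective_of_surjective hsurj (by simpa using hT))
    (O := Set.univ.pi fun _ ↦ Set.Ioi 0) (isOpen_set_pi Set.finite_univ fun _ _ ↦ isOpen_Ioi)
    ⟨1, by simp⟩
  exact ⟨a, by simpa using hpos, fun T hT ↦ by_contra fun h ↦ ha ⟨T, h⟩ hT⟩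

/-- A weight is generic for the family `U` if each linear functional agrees with it only on
linearly independent vectors, so that the regular subdivision it induces is a triangulation. -/
def IsGenericWeight (U : ι → E) (w : ι → ℝ) : Prop :=
  ∀ φ : Module.Dual ℝ E, LinearIndepOn ℝ U {u | φ (U u) = w u}

theorem exists_isGenericWeight [Finite ι] (U : ι → E) : ∃ w, IsGenericWeight U w := by
  have := Fintype.ofFinite ι
  have hrel : ∀ T : {T : Set ι // ¬ LinearIndepOn ℝ U T}, ∃ d : ι → ℝ,
      d ≠ 0 ∧ (∀ u ∉ T.1, d u = 0) ∧ ∑ u, d u • U u = 0 := by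
    rintro ⟨T, hT⟩
    obtain ⟨d, hdT, hd, hne⟩ := linearDepOn_iff.1 hT
    refine ⟨d, by simpa using hne, fun u hu ↦ ?_, ?_⟩
    · by_contra hdu
      exact hu ((Finsupp.mem_supported ℝ d).1 hdT (Finsupp.mem_support_iff.2 hdu))
    · rwa [← Finsupp.sum_fintype d (fun u x ↦ x • U u) (by simp)]
  choose d hne hsupp hd using hrel
  obtain ⟨w, -, hw⟩ := exists_mem_forall_notMem_submodule
    (S := fun T ↦ (Fintype.linearCombination ℝ (d T)).ker)
    (fun T hT ↦ hne T <| by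
      classical
      ext u
      simpa using LinearMap.congr_fun (LinearMap.ker_eq_top.1 hT) (Pi.single u 1))
    isOpen_univ Set.univ_nonempty
  refine ⟨w, fun φ ↦ by_contra fun h ↦ hw ⟨_, h⟩ ?_⟩
  have hφ : ∑ u, d ⟨_, h⟩ u * φ (U u) = 0 := by
    simpa using congrArg φ (hd ⟨_, h⟩)
  simp only [LinearMap.mem_ker, Fintype.linearCombination_apply, smul_eq_mul]
  rw [← hφ]
  refine sum_congr rfl fun u _ ↦ ?_
  by_cases hu : φ (U u) = w u
  · rw [hu, mul_comm]
  · simp [hsupp ⟨_, h⟩ u hu]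

end GenericVectors

section RegularTriangulations

variable {ι E : Type*} [AddCommGroup E] [Module ℝ E]

theorem mem_hull_range_iff [Fintype ι] {U : ι → E} {z : E} :
    z ∈ PointedCone.hull ℝ (Set.range U) ↔ ∃ c : ι → ℝ, (∀ u, 0 ≤ c u) ∧ ∑ u, c u • U u = z := by
  rw [Submodule.mem_span_range_iff_exists_fun]
  constructor
  · rintro ⟨c, rfl⟩
    exact ⟨fun u ↦ c u, fun u ↦ (c u).2, rfl⟩
  · rintro ⟨c, hc, rfl⟩
    exact ⟨fun u ↦ ⟨c u, hc u⟩, rfl⟩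

/-- The positive combinations of a family, that is, the relative interior of the cone it
generates. -/
def openCone [Fintype ι] (U : ι → E) : Set E :=
  {z | ∃ c : ι → ℝ, (∀ u, 0 < c u) ∧ ∑ u, c u • U u = z}

theorem openCone_subset_hull [Fintype ι] (U : ι → E) :
    openCone U ⊆ PointedCone.hull ℝ (Set.range U) := fun _ ⟨c, hc, hz⟩ ↦
  mem_hull_range_iff.2 ⟨c, fun u ↦ (hc u).le, hz⟩

theorem eventually_forall_nonneg_add_smul [Finite ι] {c d : ι → ℝ} (hc : ∀ u, 0 ≤ c u)
    (hd : ∀ u, c u = 0 → 0 ≤ d u) : ∀ᶠ t : ℝ in 𝓝[>] 0, ∀ u, 0 ≤ (c + t • d) u := by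
  refine eventually_all.2 fun u ↦ ?_
  rcases (hc u).eq_or_lt with h0 | hpos
  · filter_upwards [self_mem_nhdsWithin] with t ht
    simpa [← h0] using mul_nonneg (le_of_lt ht) (hd u h0.symm)
  · have : Tendsto (fun t : ℝ ↦ c u + t * d u) (𝓝 0) (𝓝 (c u + 0 * d u)) :=
      Continuous.tendsto (by fun_prop) 0
    rw [zero_mul, add_zero] at this
    filter_upwards [(this.mono_left nhdsWithin_le_nhds).eventually_const_lt hpos] with t ht
    simpa using ht.le

theorem eventually_add_smul_neg_mem_hull [Fintype ι] {U : ι → E} {s z : E} (hs : s ∈ openCone U)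
    (hz : z ∈ openCone U) :
    ∀ᶠ t : ℝ in 𝓝[>] 0, z + t • -s ∈ PointedCone.hull ℝ (Set.range U) := by
  obtain ⟨a, -, rfl⟩ := hs
  obtain ⟨c, hc, rfl⟩ := hz
  filter_upwards [eventually_forall_nonneg_add_smul (d := -a) (fun u ↦ (hc u).le)
    fun u hu ↦ absurd hu (hc u).ne'] with t ht
  refine mem_hull_range_iff.2 ⟨_, ht, ?_⟩
  simp [add_smul, sum_add_distrib, smul_sum, mul_smul]

theorem mem_openCone_of_add_smul_neg_mem_hull [Fintype ι] {U : ι → E} {s z : E} {t : ℝ}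
    (hs : s ∈ openCone U) (ht : 0 < t)
    (h : z + t • -s ∈ PointedCone.hull ℝ (Set.range U)) : z ∈ openCone U := by
  obtain ⟨a, ha, rfl⟩ := hs
  obtain ⟨c, hc, hcz⟩ := mem_hull_range_iff.1 h
  refine ⟨c + t • a, fun u ↦ add_pos_of_nonneg_of_pos (hc u) (mul_pos ht (ha u)), ?_⟩
  simp [add_smul, sum_add_distrib, mul_smul, ← smul_sum, hcz]

/-- `B` indexes a basis which is the tight set of a functional bounded above by the weight `w`;
geometrically, it is a full-dimensional cell of the regular subdivision of the cone over `U`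
induced by `w`. -/
structure IsLowerBasis (U : ι → E) (w : ι → ℝ) (B : Set ι) : Prop where
  linearIndepOn : LinearIndepOn ℝ U B
  span_eq_top : Submodule.span ℝ (U '' B) = ⊤
  exists_dual : ∃ φ : Module.Dual ℝ E, (∀ u, φ (U u) ≤ w u) ∧ ∀ u, φ (U u) = w u ↔ u ∈ B

namespace IsLowerBasis

variable {U : ι → E} {w : ι → ℝ} {B B' : Set ι} {s y z : E}

/-- The members of `U` indexed by `B`, as a basis. -/
noncomputable def basis (h : IsLowerBasis U w B) : Module.Basis B ℝ E :=
  Module.Basis.mk h.linearIndepOn (by rw [← h.span_eq_top, Set.image_eq_range])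

@[simp]
theorem basis_apply (h : IsLowerBasis U w B) (u : B) : h.basis u = U u :=
  Module.Basis.mk_apply _ _ u

theorem subset_of_pos [Finite ι] (h : IsLowerBasis U w B) (h' : IsLowerBasis U w B')
    (hy : ∀ u, 0 ≤ h.basis.repr y u) (hy' : ∀ u, 0 < h'.basis.repr y u) : B' ⊆ B := by
  have := Fintype.ofFinite ι
  classical
  obtain ⟨φ, hφ, hφB⟩ := h.exists_dual
  obtain ⟨ψ, hψ, hψB⟩ := h'.exists_dual
  have expand : ∀ {C : Set ι} (hC : IsLowerBasis U w C) (χ : Module.Dual ℝ E),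
      χ y = ∑ u : C, hC.basis.repr y u * χ (U u) := fun hC χ ↦ by
    conv_lhs => rw [← hC.basis.sum_repr y]
    simp
  have hψφ : ψ y ≤ φ y := by
    rw [expand h ψ, expand h φ]
    exact sum_le_sum fun u _ ↦
      mul_le_mul_of_nonneg_left ((hψ u).trans ((hφB u).2 u.2).ge) (hy u)
  have hle : ∀ u : B', h'.basis.repr y u * φ (U u) ≤ h'.basis.repr y u * ψ (U u) := fun u ↦
    mul_le_mul_of_nonneg_left ((hφ u).trans ((hψB u).2 u.2).ge) (hy' u).le
  have heq := (sum_eq_sum_iff_of_le fun u _ ↦ hle u).1 <|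
    (sum_le_sum fun u _ ↦ hle u).antisymm (by rwa [expand h' ψ, expand h' φ] at hψφ)
  intro u hu
  have := mul_left_cancel₀ (hy' ⟨u, hu⟩).ne' (heq ⟨u, hu⟩ (mem_univ _))
  exact (hφB u).1 (this.trans ((hψB u).2 hu))

end IsLowerBasis

theorem exists_min_weight [Fintype ι] [TopologicalSpace E] [IsTopologicalAddGroup E]
    [ContinuousSMul ℝ E] [T1Space E] {U : ι → E} {η : Module.Dual ℝ E} (hη : ∀ u, 0 < η (U u))
    (w : ι → ℝ) {y : E} (hy : y ∈ PointedCone.hull ℝ (Set.range U)) :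
    ∃ c : ι → ℝ, (∀ u, 0 ≤ c u) ∧ ∑ u, c u • U u = y ∧
      ∀ c' : ι → ℝ, (∀ u, 0 ≤ c' u) → ∑ u, c' u • U u = y → ∑ u, c u * w u ≤ ∑ u, c' u * w u := by
  let K : Set (ι → ℝ) := Set.Ici 0 ∩ {c | ∑ u, c u • U u = y}
  have hKclosed : IsClosed K := by
    refine isClosed_Ici.inter ((isClosed_singleton (x := y)).preimage
      (f := fun c : ι → ℝ ↦ ∑ u, c u • U u) ?_)
    fun_prop
  have hKsub : K ⊆ Set.Icc 0 fun u ↦ η y / η (U u) := by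
    rintro c ⟨hc, rfl⟩
    refine ⟨hc, fun u ↦ (le_div_iff₀ (hη u)).2 ?_⟩
    simpa using single_le_sum (f := fun u ↦ c u * η (U u))
      (fun v _ ↦ mul_nonneg (hc v) (hη v).le) (mem_univ u)
  obtain ⟨c₀, hc₀⟩ := mem_hull_range_iff.1 hy
  obtain ⟨c, ⟨hc, hcy⟩, hmin⟩ := (isCompact_Icc.of_isClosed_subset hKclosed hKsub).exists_isMinOn
    ⟨c₀, hc₀⟩ (f := fun c ↦ ∑ u, c u * w u) (by fun_prop)
  exact ⟨c, hc, hcy, fun c' hc' hcy' ↦ hmin ⟨hc', hcy'⟩⟩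

theorem sum_mul_nonneg_of_min_weight [Fintype ι] {U : ι → E} {w c d : ι → ℝ} (hc : ∀ u, 0 ≤ c u)
    (hmin : ∀ c' : ι → ℝ, (∀ u, 0 ≤ c' u) → ∑ u, c' u • U u = ∑ u, c u • U u →
      ∑ u, c u * w u ≤ ∑ u, c' u * w u)
    (hd : ∑ u, d u • U u = 0) (hcd : ∀ u, c u = 0 → 0 ≤ d u) : 0 ≤ ∑ u, d u * w u := by
  obtain ⟨t, hnonneg, ht⟩ :=
    ((eventually_forall_nonneg_add_smul hc hcd).and self_mem_nhdsWithin).exists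
  have hle := hmin _ hnonneg (by simp [add_smul, mul_smul, sum_add_distrib, ← smul_sum, hd])
  simp only [Pi.add_apply, Pi.smul_apply, smul_eq_mul, add_mul, sum_add_distrib, mul_assoc,
    ← mul_sum] at hle
  exact nonneg_of_mul_nonneg_right (by linarith) ht

theorem exists_basis_of_span_image_eq_top {T : Set ι} {U : ι → E}
    (hT : Submodule.span ℝ (U '' T) = ⊤) :
    ∃ B ⊆ T, ∃ b : Module.Basis B ℝ E, ∀ u, b u = U u := by
  have h₀ := linearIndepOn_empty ℝ U
  have hspan := h₀.span_image_extend_eq_span_image (Set.empty_subset T)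
  exact ⟨_, h₀.extend_subset (Set.empty_subset T),
    Module.Basis.mk (h₀.linearIndepOn_extend (Set.empty_subset T))
      (by rw [← hT, ← hspan, Set.image_eq_range]), fun u ↦ Module.Basis.mk_apply _ _ u⟩

/-- Prescribe the functional to be `w` on a basis chosen in the support of the optimal `c`. If it
exceeded `w` at another vector, exchanging that vector for basis vectors would lower the weight. -/
theorem exists_dual_of_min_weight [Fintype ι] {U : ι → E} {w c : ι → ℝ} (hc : ∀ u, 0 ≤ c u)
    (hmin : ∀ c' : ι → ℝ, (∀ u, 0 ≤ c' u) → ∑ u, c' u • U u = ∑ u, c u • U u →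
      ∑ u, c u * w u ≤ ∑ u, c' u * w u)
    (hspan : Submodule.span ℝ (U '' {u | c u ≠ 0}) = ⊤) :
    ∃ φ : Module.Dual ℝ E, (∀ u, φ (U u) ≤ w u) ∧ ∀ u, c u ≠ 0 → φ (U u) = w u := by
  classical
  obtain ⟨B, hBsupp, b, hb⟩ := exists_basis_of_span_image_eq_top hspan
  let L := Fintype.linearCombination ℝ U
  let W := Fintype.linearCombination ℝ w
  let σ : E →ₗ[ℝ] ι → ℝ := b.constr ℝ fun u ↦ Pi.single (u : ι) 1
  have hσb : ∀ u : B, σ (b u) = Pi.single (u : ι) 1 := b.constr_basis ℝ _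
  have hLσ : L ∘ₗ σ = LinearMap.id := b.ext fun u ↦ by
    rw [LinearMap.comp_apply, hσb]
    simp [L, hb]
  have hσ : ∀ z, ∀ v ∉ B, σ z v = 0 := fun z v hv ↦ by
    have : LinearMap.proj v ∘ₗ σ = 0 := b.ext fun u ↦ by
      simp [hσb, show v ≠ u from fun h ↦ hv (h ▸ u.2)]
    exact LinearMap.congr_fun this z
  have hrel : ∀ v, L (Pi.single v 1 - σ (U v)) = 0 := fun v ↦ by
    rw [map_sub, ← LinearMap.comp_apply L σ, hLσ]
    simp [L]
  have hle : ∀ v, W (σ (U v)) ≤ w v := fun v ↦ by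
    have := sum_mul_nonneg_of_min_weight hc hmin (hrel v) fun u hu ↦ by
      have huB : u ∉ B := fun h ↦ hBsupp h hu
      simpa [hσ _ u huB] using (Pi.single_nonneg (α := fun _ ↦ ℝ) (i := v)).2 zero_le_one u
    simpa [sub_mul, sum_sub_distrib, Pi.single_apply, W, Fintype.linearCombination_apply] using this
  refine ⟨W ∘ₗ σ, hle, fun v hv ↦ (hle v).antisymm ?_⟩
  have := sum_mul_nonneg_of_min_weight hc hmin
    (show L (-(Pi.single v 1 - σ (U v))) = 0 by rw [map_neg, hrel, neg_zero]) fun u hu ↦ by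
      have huB : u ∉ B := fun h ↦ hBsupp h hu
      have huv : u ≠ v := fun h ↦ hv (h ▸ hu)
      simp [hσ _ u huB, huv]
  simpa [sub_mul, sum_sub_distrib, Pi.single_apply, W, Fintype.linearCombination_apply] using this

theorem exists_isLowerBasis_repr_nonneg [Finite ι] [TopologicalSpace E] [IsTopologicalAddGroup E]
    [ContinuousSMul ℝ E] [T1Space E] {U : ι → E} {η : Module.Dual ℝ E} (hη : ∀ u, 0 < η (U u))
    {w : ι → ℝ} (hw : IsGenericWeight U w) {y : E} (hgen : IsGenericVector U y)
    (hy : y ∈ PointedCone.hull ℝ (Set.range U)) :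
    ∃ B, ∃ h : IsLowerBasis U w B, ∀ u, 0 ≤ h.basis.repr y u := by
  have := Fintype.ofFinite ι
  classical
  obtain ⟨c, hc, rfl, hmin⟩ := exists_min_weight hη w hy
  have hspan : Submodule.span ℝ (U '' {u | c u ≠ 0}) = ⊤ :=
    hgen _ <| Submodule.sum_mem _ fun u _ ↦ by
      by_cases hu : c u = 0
      · simp [hu]
      · exact Submodule.smul_mem _ _ (Submodule.subset_span ⟨u, hu, rfl⟩)
  obtain ⟨φ, hφ, hφc⟩ := exists_dual_of_min_weight hc hmin hspan
  have hB : IsLowerBasis U w {u | φ (U u) = w u} :=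
    ⟨hw φ, top_unique (hspan ▸ Submodule.span_mono (Set.image_mono hφc)), φ, hφ, fun _ ↦ Iff.rfl⟩
  refine ⟨_, hB, fun v ↦ ?_⟩
  have hrepr : ∀ u, c u * hB.basis.repr (U u) v = if u = v then c v else 0 := fun u ↦ by
    by_cases hu : c u = 0
    · rw [hu, zero_mul]
      split_ifs with huv
      · rw [← huv, hu]
      · rfl
    · rw [← hB.basis_apply ⟨u, hφc u hu⟩, Module.Basis.repr_self]
      by_cases huv : u = v
      · subst huv
        simp
      · simp [huv, show (⟨u, hφc u hu⟩ : {u | φ (U u) = w u}) ≠ v from fun h ↦ huv (h ▸ rfl)]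
  rw [map_sum, Finsupp.finsetSum_apply]
  simpa [hrepr] using hc v

end RegularTriangulations

section HalfOpenDecomposition

/-- The ray of nonnegative reals, with its endpoint removed when `p` holds. -/
def halfLine (p : Prop) : Set ℝ := {x | 0 ≤ x ∧ (p → 0 < x)}

theorem eventually_nonneg_add_mul_iff (x σ : ℝ) :
    ∀ᶠ t : ℝ in 𝓝[>] 0, 0 ≤ x + t * σ ↔ x ∈ halfLine (σ < 0) := by
  have hlim : Tendsto (fun t : ℝ ↦ x + t * σ) (𝓝[>] 0) (𝓝 x) := by
    have : Tendsto (fun t : ℝ ↦ x + t * σ) (𝓝 0) (𝓝 (x + 0 * σ)) :=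
      Continuous.tendsto (by fun_prop) 0
    simpa using this.mono_left nhdsWithin_le_nhds
  rcases lt_trichotomy x 0 with hx | rfl | hx
  · filter_upwards [hlim.eventually_lt_const hx] with t ht
    exact iff_of_false ht.not_ge fun h ↦ hx.not_ge h.1
  · filter_upwards [self_mem_nhdsWithin] with t (ht : 0 < t)
    simp [halfLine, mul_nonneg_iff_of_pos_left ht]
  · filter_upwards [hlim.eventually_const_lt hx] with t ht
    exact iff_of_true ht.le ⟨hx.le, fun _ ↦ hx⟩

variable {ι κ E : Type*} [AddCommGroup E] [Module ℝ E]

/-- The simplicial cone over a basis `b`, with the facets opposite to the `b j` such that `p j`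
removed. -/
def halfOpenCone (b : Module.Basis κ ℝ E) (p : κ → Prop) : Set E :=
  {z | ∀ j, b.repr z j ∈ halfLine (p j)}

theorem eventually_forall_repr_nonneg_iff [Finite κ] (b : Module.Basis κ ℝ E)
    (s z : E) :
    ∀ᶠ t : ℝ in 𝓝[>] 0, (∀ j, 0 ≤ b.repr (z + t • s) j) ↔
      z ∈ halfOpenCone b fun j ↦ b.repr s j < 0 := by
  filter_upwards [eventually_all.2 fun j ↦ eventually_nonneg_add_mul_iff (b.repr z j) (b.repr s j)]
    with t ht
  simpa [halfOpenCone] using forall_congr' ht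

namespace IsLowerBasis

variable {U : ι → E} {w : ι → ℝ} {B B' : Set ι} {s z : E}

/-- The half-open simplicial cone over a lower basis whose removed facets are those separating it
from the vector `s`. -/
def cell (h : IsLowerBasis U w B) (s : E) : Set E :=
  halfOpenCone h.basis fun u ↦ h.basis.repr s u < 0

theorem repr_ne_zero (h : IsLowerBasis U w B) (hs : IsGenericVector U s) (u : B) :
    h.basis.repr s u ≠ 0 :=
  hs.repr_ne_zero h.basis h.basis_apply u

theorem mem_hull_of_repr_nonneg [Finite ι] (h : IsLowerBasis U w B)
    (hz : ∀ u, 0 ≤ h.basis.repr z u) : z ∈ PointedCone.hull ℝ (Set.range U) := by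
  have := Fintype.ofFinite B
  rw [← h.basis.sum_repr z]
  refine Submodule.sum_mem _ fun u _ ↦ ?_
  rw [h.basis_apply]
  exact Submodule.smul_mem _ (⟨_, hz u⟩ : NNReal) (Submodule.subset_span ⟨u, rfl⟩)

theorem cell_subset_hull [Finite ι] (h : IsLowerBasis U w B) (s : E) :
    h.cell s ⊆ PointedCone.hull ℝ (Set.range U) :=
  fun _ hz ↦ h.mem_hull_of_repr_nonneg fun u ↦ (hz u).1

theorem eventually_add_smul_mem_hull [Finite ι] (h : IsLowerBasis U w B)
    (hz : z ∈ h.cell s) :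
    ∀ᶠ t : ℝ in 𝓝[>] 0, z + t • s ∈ PointedCone.hull ℝ (Set.range U) := by
  filter_upwards [eventually_forall_repr_nonneg_iff h.basis s z] with t ht
  exact h.mem_hull_of_repr_nonneg (ht.2 hz)

theorem eq_of_mem_cell [Finite ι] (h : IsLowerBasis U w B) (h' : IsLowerBasis U w B')
    (hs : IsGenericVector U s) (hz : z ∈ h.cell s) (hz' : z ∈ h'.cell s) : B = B' := by
  obtain ⟨t, ⟨ht, ht'⟩, hgen⟩ :=
    ((eventually_forall_repr_nonneg_iff h.basis s z).and
      (eventually_forall_repr_nonneg_iff h'.basis s z)).and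
      (hs.eventually_add_smul z) |>.exists
  have hnonneg := ht.2 hz
  have hnonneg' := ht'.2 hz'
  exact (h'.subset_of_pos h hnonneg' fun u ↦
      (hnonneg u).lt_of_ne' (h.repr_ne_zero hgen u)).antisymm
    (h.subset_of_pos h' hnonneg fun u ↦ (hnonneg' u).lt_of_ne' (h'.repr_ne_zero hgen u))

end IsLowerBasis

variable {U : ι → E} {w : ι → ℝ} {s : E}

theorem pairwise_disjoint_cell [Finite ι] (hs : IsGenericVector U s) :
    Pairwise (Function.onFun Disjoint fun B : {B // IsLowerBasis U w B} ↦ B.2.cell s) :=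
  fun B B' hne ↦ Set.disjoint_left.2 fun _ hz hz' ↦
    hne (Subtype.ext (B.2.eq_of_mem_cell B'.2 hs hz hz'))

section Cover

variable [TopologicalSpace E] [IsTopologicalAddGroup E] [ContinuousSMul ℝ E] [T1Space E]
  {η : Module.Dual ℝ E}

theorem exists_mem_cell_of_frequently_mem_hull [Finite ι] (hη : ∀ u, 0 < η (U u))
    (hw : IsGenericWeight U w) (hs : IsGenericVector U s) {z : E}
    (hz : ∃ᶠ t : ℝ in 𝓝[>] 0, z + t • s ∈ PointedCone.hull ℝ (Set.range U)) :
    ∃ B, ∃ h : IsLowerBasis U w B, z ∈ h.cell s := by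
  have hev : ∀ᶠ t : ℝ in 𝓝[>] 0, ∀ B : {B // IsLowerBasis U w B},
      (∀ j, 0 ≤ B.2.basis.repr (z + t • s) j) ↔ z ∈ B.2.cell s := eventually_all.2 fun B ↦
    eventually_forall_repr_nonneg_iff B.2.basis s z
  obtain ⟨t, hmem, hcell, hgen⟩ := (hz.and_eventually (hev.and (hs.eventually_add_smul z))).exists
  obtain ⟨B, h, hB⟩ := exists_isLowerBasis_repr_nonneg hη hw hgen hmem
  exact ⟨B, h, (hcell ⟨B, h⟩).1 hB⟩

theorem iUnion_cell_eq_hull [Fintype ι] (hη : ∀ u, 0 < η (U u)) (hw : IsGenericWeight U w)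
    (hs : IsGenericVector U s) (hpos : s ∈ openCone U) :
    ⋃ B : {B // IsLowerBasis U w B}, B.2.cell s = PointedCone.hull ℝ (Set.range U) := by
  refine (Set.iUnion_subset fun B ↦ B.2.cell_subset_hull s).antisymm fun z hz ↦ ?_
  have hev : ∀ᶠ t : ℝ in 𝓝[>] 0, z + t • s ∈ PointedCone.hull ℝ (Set.range U) := by
    filter_upwards [self_mem_nhdsWithin] with t ht
    exact add_mem hz (Submodule.smul_mem _ (⟨t, le_of_lt ht⟩ : NNReal)
      (openCone_subset_hull U hpos))
  obtain ⟨B, h, hB⟩ := exists_mem_cell_of_frequently_mem_hull hη hw hs hev.frequently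
  exact Set.mem_iUnion.2 ⟨⟨B, h⟩, hB⟩

theorem iUnion_cell_neg_eq_openCone [Fintype ι] (hη : ∀ u, 0 < η (U u))
    (hw : IsGenericWeight U w) (hs : IsGenericVector U s) (hpos : s ∈ openCone U) :
    ⋃ B : {B // IsLowerBasis U w B}, B.2.cell (-s) = openCone U := by
  refine (Set.iUnion_subset fun B z hz ↦ ?_).antisymm fun z hz ↦ ?_
  · obtain ⟨t, hmem, ht⟩ :=
      ((B.2.eventually_add_smul_mem_hull hz).and self_mem_nhdsWithin).exists
    exact mem_openCone_of_add_smul_neg_mem_hull hpos ht hmem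
  · obtain ⟨B, h, hB⟩ := exists_mem_cell_of_frequently_mem_hull hη hw hs.neg
      (eventually_add_smul_neg_mem_hull hpos hz).frequently
    exact Set.mem_iUnion.2 ⟨⟨B, h⟩, hB⟩

end Cover

end HalfOpenDecomposition

section WeakCompositions

open Polynomial in
/-- The polynomial `t ↦ ((k - 1)!)⁻¹ (t - h + 1) ⋯ (t - h + k - 1)`. For natural numbers `k ≥ 1`,
`h` and `t > h - k` its value counts the weak compositions of `t - h` into `k` parts; the shift `h`
is real because it is to be the height of an arbitrary point. -/
noncomputable def weakCompositionPoly (k : ℕ) (h : ℝ) : ℝ[X] :=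
  C ((k - 1).factorial : ℝ)⁻¹ * (ascPochhammer ℝ (k - 1)).comp (X + C (1 - h))

theorem eval_weakCompositionPoly (k : ℕ) (h t : ℝ) : (weakCompositionPoly k h).eval t =
    ((k - 1).factorial : ℝ)⁻¹ * (ascPochhammer ℝ (k - 1)).eval (t - h + 1) := by
  simp [weakCompositionPoly, sub_add_eq_add_sub, add_sub_assoc]

theorem natDegree_weakCompositionPoly_le (k : ℕ) (h : ℝ) :
    (weakCompositionPoly k h).natDegree ≤ k - 1 := by
  refine (Polynomial.natDegree_C_mul_le _ _).trans_eq ?_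
  rw [Polynomial.natDegree_comp, ascPochhammer_natDegree, Polynomial.natDegree_X_add_C, mul_one]

theorem eval_neg_weakCompositionPoly (k : ℕ) (h t : ℝ) : (weakCompositionPoly k h).eval (-t) =
    (-1) ^ (k - 1) * (weakCompositionPoly k (k - h)).eval t := by
  cases k with
  | zero => simp [eval_weakCompositionPoly]
  | succ k =>
    rw [eval_weakCompositionPoly, eval_weakCompositionPoly, Nat.add_sub_cancel,
      show -t - h + 1 = -(t + h - 1) by ring, ascPochhammer_eval_neg_eq_descPochhammer,
      descPochhammer_eval_eq_ascPochhammer, mul_left_comm]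
    congr 4
    push_cast
    ring

theorem eval_weakCompositionPoly_natCast {k h t : ℕ} (hk : k ≠ 0) (hlt : h < k + t) :
    (weakCompositionPoly k h).eval (t : ℝ) = if h ≤ t then (k.multichoose (t - h) : ℝ) else 0 := by
  obtain ⟨k, rfl⟩ := Nat.exists_eq_succ_of_ne_zero hk
  rw [eval_weakCompositionPoly, Nat.succ_eq_add_one, Nat.add_sub_cancel]
  split_ifs with hle
  · obtain ⟨d, rfl⟩ := Nat.exists_eq_add_of_le hle
    have hfact : (ascPochhammer ℝ k).eval ((d : ℝ) + 1) = k.factorial * (d + k).choose k := by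
      rw [← Nat.cast_add_one, ← Nat.cast_ascFactorial, Nat.ascFactorial_eq_factorial_mul_choose,
        Nat.cast_mul]
    rw [Nat.cast_add, add_sub_cancel_left, hfact,
      inv_mul_cancel_left₀ (Nat.cast_ne_zero.2 k.factorial_ne_zero), Nat.add_sub_cancel_left,
      Nat.multichoose_eq, show k + 1 + d - 1 = k + d by lia, add_comm d k, Nat.choose_symm_add]
  · have hcast : (t : ℝ) - h + 1 = -((h - t - 1 : ℕ) : ℝ) := by
      rw [Nat.sub_sub, Nat.cast_sub (by lia)]
      push_cast
      ring
    rw [hcast, ascPochhammer_eval_neg_coe_nat_of_lt (by lia), mul_zero]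

variable {κ τ : Type*}

theorem natCard_add_sum_eq [Fintype κ] [Nonempty κ] {m l : ℕ} (hlt : m < Fintype.card κ + l) :
    (Nat.card {f : κ → ℕ // m + ∑ j, f j = l} : ℝ) =
      (weakCompositionPoly (Fintype.card κ) m).eval (l : ℝ) := by
  classical
  rw [eval_weakCompositionPoly_natCast Fintype.card_ne_zero hlt]
  split_ifs with hle
  · rw [← Nat.card_eq_fintype_card, ← Sym.natCard_sym_eq_multichoose,
      Nat.card_congr (Sym.equivNatSumOfFintype κ (l - m))]
    congr! 4
    lia
  · have : IsEmpty {f : κ → ℕ // m + ∑ j, f j = l} := ⟨fun f ↦ hle (f.2 ▸ Nat.le_add_right _ _)⟩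
    simp

/-- A family `f` restricts independently to the fibres of `color`. -/
def subtypeForallFiberEquiv (color : κ → τ) {α : Type*} (P : ∀ i, ({j // color j = i} → α) → Prop) :
    {f : κ → α // ∀ i, P i fun j ↦ f j} ≃ ∀ i, {g : {j // color j = i} → α // P i g} :=
  ((((Equiv.sigmaFiberEquiv color).arrowCongr (Equiv.refl α)).symm.trans
    (Equiv.piCurry fun _ _ ↦ α)).subtypeEquiv fun _ ↦ Iff.rfl).trans Equiv.subtypePiEquivPi

theorem natCard_add_sum_fiber_eq [Fintype κ] [Fintype τ] [DecidableEq τ] {color : κ → τ}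
    (hcolor : color.Surjective) {m l : τ → ℕ}
    (hlt : ∀ i, m i < Fintype.card {j // color j = i} + l i) :
    (Nat.card {f : κ → ℕ // ∀ i, m i + ∑ j : {j // color j = i}, f j = l i} : ℝ) =
      ∏ i, (weakCompositionPoly (Fintype.card {j // color j = i}) (m i)).eval (l i : ℝ) := by
  rw [Nat.card_congr (subtypeForallFiberEquiv color fun i g ↦ m i + ∑ j, g j = l i), Nat.card_pi,
    Nat.cast_prod]
  refine prod_congr rfl fun i _ ↦ ?_
  obtain ⟨j, hj⟩ := hcolor i
  have : Nonempty {j // color j = i} := ⟨⟨j, hj⟩⟩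
  exact natCard_add_sum_eq (hlt i)

theorem totalDegree_toMvPolynomial_le {R σ : Type*} [CommSemiring R] [Nontrivial R] (i : σ)
    (p : Polynomial R) :
    (p.toMvPolynomial i).totalDegree ≤ p.natDegree := by
  rw [Polynomial.toMvPolynomial, Polynomial.aeval_eq_sum_range]
  refine MvPolynomial.totalDegree_finsetSum_le fun d hd ↦ ?_
  exact (MvPolynomial.totalDegree_smul_le _ _).trans
    ((MvPolynomial.totalDegree_X_pow _ _).trans_le (Nat.lt_succ_iff.1 (mem_range.1 hd)))

end WeakCompositions

section HalfOpenBox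

/-- The unit interval containing `1` but not `0` when `p` holds, and `0` but not `1` otherwise. -/
def halfUnit (p : Prop) : Set ℝ := {x | x ∈ halfLine p ∧ 1 - x ∈ halfLine ¬p}

theorem one_sub_mem_halfUnit_not {p : Prop} {x : ℝ} (hx : x ∈ halfUnit p) :
    1 - x ∈ halfUnit ¬p :=
  ⟨hx.2, by simpa [not_not] using hx.1⟩

theorem exists_sub_natCast_mem_halfUnit {p : Prop} {x : ℝ} (hx : x ∈ halfLine p) :
    ∃ m : ℕ, x - m ∈ halfUnit p := by
  obtain ⟨h0, hp⟩ := hx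
  by_cases h : p
  · obtain ⟨m, hm⟩ := Nat.exists_eq_succ_of_ne_zero (Nat.ceil_pos.2 (hp h)).ne'
    have hlt : (m : ℝ) < x := Nat.lt_ceil.1 (by lia)
    have hle : x ≤ m + 1 := by exact_mod_cast hm ▸ Nat.le_ceil x
    refine ⟨m, ⟨?_, fun _ ↦ ?_⟩, ?_, fun hn ↦ absurd h hn⟩ <;> linarith
  · have hle := Nat.floor_le h0
    have hlt := Nat.lt_floor_add_one x
    refine ⟨⌊x⌋₊, ⟨?_, fun h' ↦ absurd h' h⟩, ?_, fun _ ↦ ?_⟩ <;> linarith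

theorem eq_of_add_natCast_eq_of_mem_halfUnit {p : Prop} {x y : ℝ} {m n : ℕ} (hx : x ∈ halfUnit p)
    (hy : y ∈ halfUnit p) (h : x + m = y + n) : m = n := by
  obtain ⟨⟨hx0, hxp⟩, hx1, hxn⟩ := hx
  obtain ⟨⟨hy0, hyp⟩, hy1, hyn⟩ := hy
  have hlt : x - y < 1 ∧ y - x < 1 := by
    by_cases hp : p
    · constructor <;> linarith [hxp hp, hyp hp]
    · constructor <;> linarith [hxn hp, hyn hp]
  have hmn : (m : ℝ) < n + 1 := by linarith
  have hnm : (n : ℝ) < m + 1 := by linarith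
  norm_cast at hmn hnm
  lia

variable {κ E : Type*} [AddCommGroup E] [Module ℝ E]

/-- The fundamental parallelepiped of the half-open cone `halfOpenCone b p`. -/
def halfOpenBox (b : Module.Basis κ ℝ E) (p : κ → Prop) : Set E :=
  {x | ∀ j, b.repr x j ∈ halfUnit (p j)}

variable [Fintype κ] {b : Module.Basis κ ℝ E} {p : κ → Prop}

theorem sum_sub_mem_halfOpenBox_not {x : E} (hx : x ∈ halfOpenBox b p) :
    ∑ j, b j - x ∈ halfOpenBox b fun j ↦ ¬p j := fun j ↦ by
  classical
  simpa [Finsupp.single_apply] using one_sub_mem_halfUnit_not (hx j)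

variable (b) in
theorem repr_add_sum_natCast_smul (x : E) (f : κ → ℕ) (j : κ) :
    b.repr (x + ∑ j, f j • b j) j = b.repr x j + f j := by
  classical
  simp [Finsupp.single_apply]

theorem exists_add_sum_smul_eq_of_mem_halfOpenCone {z : E} (hz : z ∈ halfOpenCone b p) :
    ∃ x ∈ halfOpenBox b p, ∃ f : κ → ℕ, x + ∑ j, f j • b j = z := by
  choose f hf using fun j ↦ exists_sub_natCast_mem_halfUnit (hz j)
  refine ⟨z - ∑ j, f j • b j, fun j ↦ ?_, f, sub_add_cancel _ _⟩
  have hj := repr_add_sum_natCast_smul b (z - ∑ j, f j • b j) f j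
  rw [sub_add_cancel] at hj
  exact eq_sub_of_add_eq hj.symm ▸ hf j

theorem add_sum_smul_mem_halfOpenCone {x : E} (hx : x ∈ halfOpenBox b p) (f : κ → ℕ) :
    x + ∑ j, f j • b j ∈ halfOpenCone b p := fun j ↦ by
  have hj := (hx j).1
  rw [repr_add_sum_natCast_smul]
  exact ⟨add_nonneg hj.1 (f j).cast_nonneg, fun h ↦ add_pos_of_pos_of_nonneg (hj.2 h)
    (f j).cast_nonneg⟩

theorem eq_and_eq_of_add_sum_smul_eq {x y : E} {f g : κ → ℕ} (hx : x ∈ halfOpenBox b p)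
    (hy : y ∈ halfOpenBox b p) (h : x + ∑ j, f j • b j = y + ∑ j, g j • b j) : x = y ∧ f = g := by
  have hfg : f = g := funext fun j ↦ by
    refine eq_of_add_natCast_eq_of_mem_halfUnit (hx j) (hy j) ?_
    rw [← repr_add_sum_natCast_smul, h, repr_add_sum_natCast_smul]
  subst hfg
  exact ⟨add_right_cancel h, rfl⟩

theorem sep_halfOpenCone_eq_iUnion {Λ : AddSubgroup E} (hb : ∀ j, b j ∈ Λ) (Q : E → Prop) :
    {z | z ∈ Λ ∧ z ∈ halfOpenCone b p ∧ Q z} = ⋃ x : ↥((Λ : Set E) ∩ halfOpenBox b p),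
      (fun f : κ → ℕ ↦ (x : E) + ∑ j, f j • b j) '' {f | Q (x + ∑ j, f j • b j)} := by
  have hmem : ∀ f : κ → ℕ, ∑ j, f j • b j ∈ Λ := fun f ↦ sum_mem fun j _ ↦ nsmul_mem (hb j) _
  ext z
  simp only [Set.mem_iUnion, Set.mem_image, Set.mem_ofPred_eq]
  constructor
  · rintro ⟨hz, hcone, hQ⟩
    obtain ⟨x, hx, f, rfl⟩ := exists_add_sum_smul_eq_of_mem_halfOpenCone hcone
    exact ⟨⟨x, (add_mem_cancel_right (hmem f)).1 hz, hx⟩, f, hQ, rfl⟩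
  · rintro ⟨⟨x, hxΛ, hx⟩, f, hQ, rfl⟩
    exact ⟨add_mem hxΛ (hmem f), add_sum_smul_mem_halfOpenCone hx f, hQ⟩

theorem finite_inter_halfOpenBox {κ E : Type*} [Finite κ] [NormedAddCommGroup E]
    [NormedSpace ℝ E] (b : Module.Basis κ ℝ E) (p : κ → Prop) (Λ : AddSubgroup E)
    [DiscreteTopology Λ] :
    ((Λ : Set E) ∩ halfOpenBox b p).Finite := by
  have := Fintype.ofFinite κ
  have : FiniteDimensional ℝ E := b.finiteDimensional_of_finite
  have : ProperSpace E := FiniteDimensional.proper ℝ E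
  have hbdd : Bornology.IsBounded (halfOpenBox b p) := by
    refine ((isCompact_Icc (a := (0 : κ → ℝ)) (b := 1)).image
      b.equivFunL.symm.continuous).isBounded.subset fun x hx ↦
        ⟨b.equivFunL x, ⟨fun j ↦ (hx j).1.1, fun j ↦ sub_nonneg.1 (hx j).2.1⟩, ?_⟩
    exact b.equivFunL.symm_apply_apply x
  rw [Set.inter_comm]
  exact Metric.finite_isBounded_inter_isClosed DiscreteTopology.isDiscrete hbdd
    AddSubgroup.isClosed_of_discrete

end HalfOpenBox

section ConePolynomial

variable {κ τ E : Type*} [Fintype κ] [DecidableEq τ] [AddCommGroup E] [Module ℝ E]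
  {b : Module.Basis κ ℝ E} {p : κ → Prop} {color : κ → τ} {H : E →ₗ[ℝ] τ → ℝ} {Λ : AddSubgroup E}

theorem height_eq_sum_repr (hH : ∀ j, H (b j) = Pi.single (color j) 1) (z : E) (i : τ) :
    H z i = ∑ j : {j // color j = i}, b.repr z j := by
  conv_lhs => rw [← b.sum_repr z]
  have hsubtype : ∑ j with color j = i, b.repr z j = ∑ j : {j // color j = i}, b.repr z j :=
    sum_subtype _ (by simp) _
  rw [map_sum, Finset.sum_apply, ← hsubtype, sum_filter]
  simp [hH, Pi.single_apply, eq_comm]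

theorem height_add_sum_smul (hH : ∀ j, H (b j) = Pi.single (color j) 1) (x : E) (f : κ → ℕ)
    (i : τ) : H (x + ∑ j, f j • b j) i = H x i + ∑ j : {j // color j = i}, f j := by
  simp only [height_eq_sum_repr hH, repr_add_sum_natCast_smul, sum_add_distrib, Nat.cast_sum]

theorem exists_repr_pos_of_height_pos {κ : Type*} [Finite κ] {b : Module.Basis κ ℝ E}
    {color : κ → τ} (hH : ∀ j, H (b j) = Pi.single (color j) 1) {z : E} {i : τ} (hz : 0 < H z i) :
    ∃ j, color j = i ∧ 0 < b.repr z j := by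
  have := Fintype.ofFinite κ
  rw [height_eq_sum_repr hH, ← sum_const_zero (ι := {j // color j = i}) (s := univ)] at hz
  obtain ⟨⟨j, hj⟩, -, hpos⟩ := exists_lt_of_sum_lt hz
  exact ⟨j, hj, hpos⟩

theorem finite_setOf_height_add_sum_smul_eq (hH : ∀ j, H (b j) = Pi.single (color j) 1) {x : E}
    (hx : x ∈ halfOpenBox b p) (l : τ → ℝ) :
    {f : κ → ℕ | H (x + ∑ j, f j • b j) = l}.Finite := by
  refine (Set.Finite.pi' fun j ↦ Set.finite_Iic ⌊l (color j)⌋₊).subset fun f hf j ↦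
    Nat.le_floor ?_
  calc (f j : ℝ) ≤ ∑ j' : {j' // color j' = color j}, (f j' : ℝ) :=
        single_le_sum (f := fun j' : {j' // color j' = color j} ↦ (f j' : ℝ))
          (fun _ _ ↦ Nat.cast_nonneg _) (mem_univ ⟨j, rfl⟩)
    _ ≤ H x (color j) + ∑ j' : {j' // color j' = color j}, (f j' : ℝ) :=
        le_add_of_nonneg_left <| height_eq_sum_repr hH x _ ▸ sum_nonneg fun j' _ ↦ (hx j').1.1
    _ = l (color j) := by
        rw [← congr_fun hf, height_add_sum_smul hH, Nat.cast_sum]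

theorem finite_sep_halfOpenCone {κ : Type*} [Finite κ] {b : Module.Basis κ ℝ E} {p : κ → Prop}
    {color : κ → τ} [Finite ↥((Λ : Set E) ∩ halfOpenBox b p)]
    (hH : ∀ j, H (b j) = Pi.single (color j) 1) (hb : ∀ j, b j ∈ Λ) (l : τ → ℝ) :
    {z | z ∈ Λ ∧ z ∈ halfOpenCone b p ∧ H z = l}.Finite := by
  have := Fintype.ofFinite κ
  rw [sep_halfOpenCone_eq_iUnion hb]
  exact Set.finite_iUnion fun x ↦ (finite_setOf_height_add_sum_smul_eq hH x.2.2 l).image _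

theorem exists_natCast_eq_height_lt (hH : ∀ j, H (b j) = Pi.single (color j) 1) {x : E}
    (hx : x ∈ halfOpenBox b p) {i : τ} (hint : ∃ m : ℤ, H x i = m) {l : ℕ}
    (hl : l ≠ 0 ∨ ∃ j, color j = i ∧ ¬p j) :
    ∃ m : ℕ, H x i = m ∧ m < Fintype.card {j // color j = i} + l := by
  obtain ⟨m, hm⟩ := hint
  have hsum := height_eq_sum_repr hH x i
  have hcard : (Fintype.card {j // color j = i} : ℝ) = ∑ j : {j // color j = i}, 1 := by simp
  have h0 : 0 ≤ H x i := hsum ▸ sum_nonneg fun j _ ↦ (hx j).1.1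
  lift m to ℕ using by exact_mod_cast hm ▸ h0
  have hle : ∀ j, b.repr x j ≤ 1 := fun j ↦ sub_nonneg.1 (hx j).2.1
  have hlt : H x i < Fintype.card {j // color j = i} + l := by
    rw [hsum, hcard]
    rcases hl with hl | ⟨j, hj, hp⟩
    · exact (sum_le_sum fun (j : {j // color j = i}) _ ↦ hle j).trans_lt
        (lt_add_of_pos_right _ (Nat.cast_pos.2 hl.bot_lt))
    · exact (sum_lt_sum (fun (j : {j // color j = i}) _ ↦ hle j)
        ⟨⟨j, hj⟩, mem_univ _, sub_pos.1 ((hx j).2.2 hp)⟩).trans_le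
          (le_add_of_nonneg_right l.cast_nonneg)
  exact ⟨m, hm, by exact_mod_cast hm ▸ hlt⟩

variable [Fintype τ]

/-- The polynomial in the height `l` counting the lattice points of height `l` in the half-open
cone `halfOpenCone b p`: each point `x` of the fundamental parallelepiped contributes, in each
color, the weak compositions of `l i - H x i`. If these points are infinite in number, the sum is
`0` by convention. -/
noncomputable def conePoly (Λ : AddSubgroup E) (H : E →ₗ[ℝ] τ → ℝ) (color : κ → τ)
    (b : Module.Basis κ ℝ E) (p : κ → Prop) : MvPolynomial τ ℝ :=
  ∑ᶠ x : ↥((Λ : Set E) ∩ halfOpenBox b p),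
    ∏ i, (weakCompositionPoly (Fintype.card {j // color j = i}) (H x i)).toMvPolynomial i

theorem eval_conePoly [Finite ↥((Λ : Set E) ∩ halfOpenBox b p)] (t : τ → ℝ) :
    MvPolynomial.eval t (conePoly Λ H color b p) = ∑ᶠ x : ↥((Λ : Set E) ∩ halfOpenBox b p),
      ∏ i, (weakCompositionPoly (Fintype.card {j // color j = i}) (H x i)).eval (t i) := by
  rw [conePoly, map_finsum _ (Set.toFinite _)]
  simp [MvPolynomial.eval_toMvPolynomial]

theorem sum_card_fiber_sub_one_add_card (hcolor : color.Surjective) :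
    ∑ i, (Fintype.card {j // color j = i} - 1) + Fintype.card τ = Fintype.card κ := by
  have hpos : ∀ i, 1 ≤ Fintype.card {j // color j = i} := fun i ↦
    let ⟨j, hj⟩ := hcolor i
    Fintype.card_pos_iff.2 ⟨⟨j, hj⟩⟩
  rw [Fintype.card_congr (Equiv.sigmaFiberEquiv color).symm, Fintype.card_sigma, ← Finset.card_univ,
    card_eq_sum_ones, ← sum_add_distrib]
  exact sum_congr rfl fun i _ ↦ Nat.sub_add_cancel (hpos i)

theorem totalDegree_conePoly_le [Finite ↥((Λ : Set E) ∩ halfOpenBox b p)]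
    (hcolor : color.Surjective) :
    (conePoly Λ H color b p).totalDegree ≤ Fintype.card κ - Fintype.card τ := by
  have := Fintype.ofFinite ↥((Λ : Set E) ∩ halfOpenBox b p)
  rw [← sum_card_fiber_sub_one_add_card hcolor, Nat.add_sub_cancel, conePoly,
    finsum_eq_sum_of_fintype]
  refine MvPolynomial.totalDegree_finsetSum_le fun x _ ↦ ?_
  exact (MvPolynomial.totalDegree_finsetProd _ _).trans <| sum_le_sum fun i _ ↦
    (totalDegree_toMvPolynomial_le _ _).trans (natDegree_weakCompositionPoly_le _ _)

theorem eval_neg_conePoly [Finite ↥((Λ : Set E) ∩ halfOpenBox b p)]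
    [Finite ↥((Λ : Set E) ∩ halfOpenBox b fun j ↦ ¬p j)]
    (hH : ∀ j, H (b j) = Pi.single (color j) 1)
    (hb : ∀ j, b j ∈ Λ) (hcolor : color.Surjective) (t : τ → ℝ) :
    MvPolynomial.eval (-t) (conePoly Λ H color b p) =
      (-1) ^ (Fintype.card κ - Fintype.card τ) *
        MvPolynomial.eval t (conePoly Λ H color b fun j ↦ ¬p j) := by
  have hsum : ∑ j, b j ∈ Λ := sum_mem fun j _ ↦ hb j
  have hmaps : ∀ q : κ → Prop, ∀ x ∈ (Λ : Set E) ∩ halfOpenBox b q,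
      ∑ j, b j - x ∈ (Λ : Set E) ∩ halfOpenBox b fun j ↦ ¬q j := fun q x hx ↦
    ⟨sub_mem hsum hx.1, sum_sub_mem_halfOpenBox_not hx.2⟩
  let e : ↥((Λ : Set E) ∩ halfOpenBox b p) ≃ ↥((Λ : Set E) ∩ halfOpenBox b fun j ↦ ¬p j) :=
    (Equiv.subLeft (∑ j, b j)).subtypeEquiv fun x ↦
      ⟨hmaps p x, fun h ↦ by simpa [not_not] using hmaps _ _ h⟩
  have hHe : ∀ x i, H (e x) i = Fintype.card {j // color j = i} - H x i := fun x i ↦ by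
    have : H (∑ j, b j) i = Fintype.card {j // color j = i} := by
      classical
      simp [height_eq_sum_repr hH, Finsupp.single_apply]
    simp [e, ← this]
  rw [eval_conePoly, eval_conePoly, ← finsum_comp_equiv e, mul_finsum]
  refine finsum_congr fun x ↦ ?_
  rw [← sum_card_fiber_sub_one_add_card hcolor, Nat.add_sub_cancel, ← prod_pow_eq_pow_sum,
    ← prod_mul_distrib]
  exact prod_congr rfl fun i _ ↦ by rw [hHe, Pi.neg_apply, eval_neg_weakCompositionPoly]

theorem ncard_halfOpenCone_eq_eval_conePoly [Finite ↥((Λ : Set E) ∩ halfOpenBox b p)]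
    (hH : ∀ j, H (b j) = Pi.single (color j) 1) (hb : ∀ j, b j ∈ Λ)
    (hΛ : ∀ z ∈ Λ, ∀ i, ∃ m : ℤ, H z i = m) (hcolor : color.Surjective) {l : τ → ℕ}
    (hl : ∀ i, l i ≠ 0 ∨ ∃ j, color j = i ∧ ¬p j) :
    ({z | z ∈ Λ ∧ z ∈ halfOpenCone b p ∧ H z = fun i ↦ (l i : ℝ)}.ncard : ℝ) =
      MvPolynomial.eval (fun i ↦ (l i : ℝ)) (conePoly Λ H color b p) := by
  choose m hm hlt using fun (x : ↥((Λ : Set E) ∩ halfOpenBox b p)) i ↦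
    exists_natCast_eq_height_lt hH x.2.2 (hΛ x x.2.1 i) (hl i)
  have hfiber : ∀ x : ↥((Λ : Set E) ∩ halfOpenBox b p),
      {f : κ → ℕ | H (x + ∑ j, f j • b j) = fun i ↦ (l i : ℝ)} =
        {f | ∀ i, m x i + ∑ j : {j // color j = i}, f j = l i} := fun x ↦ by
    ext f
    simp only [Set.mem_ofPred_eq, funext_iff, height_add_sum_smul hH, hm]
    norm_cast
  rw [sep_halfOpenCone_eq_iUnion hb, Set.ncard_iUnion_of_finite, eval_conePoly,
    Nat.cast_finsum]
  · refine finsum_congr fun x ↦ ?_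
    rw [Set.ncard_image_of_injective _ fun f g hfg ↦
      (eq_and_eq_of_add_sum_smul_eq x.2.2 x.2.2 hfg).2, hfiber]
    simp_rw [hm]
    exact natCard_add_sum_fiber_eq hcolor (hlt x)
  · exact fun x ↦ (finite_setOf_height_add_sum_smul_eq hH x.2.2 _).image _
  · refine fun x y hxy ↦ Set.disjoint_left.2 ?_
    rintro _ ⟨f, -, rfl⟩ ⟨g, -, hfg⟩
    exact hxy (Subtype.ext (eq_and_eq_of_add_sum_smul_eq y.2.2 x.2.2 hfg).1.symm)

end ConePolynomial

section GradedCones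

variable {ι τ E : Type*} [DecidableEq τ]

theorem height_pos_of_mem_openCone [Fintype ι] [AddCommGroup E] [Module ℝ E] {U : ι → E}
    {color : ι → τ} {H : E →ₗ[ℝ] τ → ℝ} (hcolor : color.Surjective)
    (hH : ∀ u, H (U u) = Pi.single (color u) 1) {s : E} (hs : s ∈ openCone U) (i : τ) :
    0 < H s i := by
  obtain ⟨a, ha, rfl⟩ := hs
  obtain ⟨u, rfl⟩ := hcolor i
  have hnonneg : ∀ v, 0 ≤ a v * (Pi.single (color v) 1 : τ → ℝ) (color u) := fun v ↦
    mul_nonneg (ha v).le ((Pi.single_nonneg (α := fun _ ↦ ℝ)).2 zero_le_one _)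
  simpa [hH] using sum_pos' (fun v _ ↦ hnonneg v) ⟨u, mem_univ u, by simpa using ha u⟩

variable [NormedAddCommGroup E] [NormedSpace ℝ E] {U : ι → E} {color : ι → τ}
  {H : E →ₗ[ℝ] τ → ℝ} {Λ : AddSubgroup E} [DiscreteTopology Λ]

theorem ncard_sep_iUnion_cell [Finite ι] {w : ι → ℝ} {s : E}
    (hH : ∀ u, H (U u) = Pi.single (color u) 1) (hU : ∀ u, U u ∈ Λ) (hs : IsGenericVector U s)
    (l : τ → ℝ) :
    ({z | z ∈ Λ ∧ z ∈ ⋃ B : {B // IsLowerBasis U w B}, B.2.cell s ∧ H z = l}.ncard : ℝ) =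
      ∑ᶠ B : {B // IsLowerBasis U w B}, ({z | z ∈ Λ ∧ z ∈ B.2.cell s ∧ H z = l}.ncard : ℝ) := by
  rw [← Nat.cast_finsum, ← Set.ncard_iUnion_of_finite]
  · congr 2
    ext z
    simp
  · intro B
    have := (finite_inter_halfOpenBox B.2.basis (fun u ↦ B.2.basis.repr s u < 0) Λ).to_subtype
    exact finite_sep_halfOpenCone (color := fun u : B.1 ↦ color u)
      (fun u ↦ by rw [B.2.basis_apply, hH]) (fun u ↦ B.2.basis_apply u ▸ hU u) l
  · exact fun B B' hne ↦ (pairwise_disjoint_cell hs hne).mono (fun z hz ↦ hz.2.1)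
      fun z hz ↦ hz.2.1

variable [Fintype τ]

theorem exists_mvPolynomial_ncard_cell_eq_eval [Finite ι] {w : ι → ℝ} {B : Set ι} {s : E}
    (h : IsLowerBasis U w B) (hH : ∀ u, H (U u) = Pi.single (color u) 1) (hU : ∀ u, U u ∈ Λ)
    (hΛ : ∀ z ∈ Λ, ∀ i, ∃ m : ℤ, H z i = m) (hs : IsGenericVector U s) (hpos : ∀ i, 0 < H s i) :
    ∃ F : MvPolynomial τ ℝ, F.totalDegree ≤ Module.finrank ℝ E - Fintype.card τ ∧
      (∀ l : τ → ℕ, ({z | z ∈ Λ ∧ z ∈ h.cell s ∧ H z = fun i ↦ (l i : ℝ)}.ncard : ℝ) =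
        MvPolynomial.eval (fun i ↦ (l i : ℝ)) F) ∧
      ∀ l : τ → ℕ, (∀ i, l i ≠ 0) →
        ({z | z ∈ Λ ∧ z ∈ h.cell (-s) ∧ H z = fun i ↦ (l i : ℝ)}.ncard : ℝ) =
          (-1) ^ (Module.finrank ℝ E - Fintype.card τ) *
            MvPolynomial.eval (-fun i ↦ (l i : ℝ)) F := by
  have := Fintype.ofFinite B
  let color' : B → τ := fun u ↦ color u
  have hH' : ∀ u, H (h.basis u) = Pi.single (color' u) 1 := fun u ↦ by rw [h.basis_apply, hH]
  have hb : ∀ u, h.basis u ∈ Λ := fun u ↦ h.basis_apply u ▸ hU u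
  have hrepr : ∀ i, ∃ u, color' u = i ∧ 0 < h.basis.repr s u := fun i ↦
    exists_repr_pos_of_height_pos hH' (hpos i)
  have hcolor : color'.Surjective := fun i ↦ (hrepr i).imp fun _ hu ↦ hu.1
  have hfinite := fun p ↦ (finite_inter_halfOpenBox h.basis p Λ).to_subtype
  have hneg : h.cell (-s) = halfOpenCone h.basis fun u ↦ ¬h.basis.repr s u < 0 := by
    simp [IsLowerBasis.cell, not_lt, fun u ↦ (h.repr_ne_zero hs u).symm.le_iff_lt]
  rw [Module.finrank_eq_card_basis h.basis]
  refine ⟨_, totalDegree_conePoly_le hcolor, fun l ↦ ncard_halfOpenCone_eq_eval_conePoly hH' hb hΛ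
    hcolor fun i ↦ .inr ((hrepr i).imp fun u hu ↦ ⟨hu.1, hu.2.not_gt⟩), fun l hl ↦ ?_⟩
  rw [hneg, ncard_halfOpenCone_eq_eval_conePoly hH' hb hΛ hcolor fun i ↦ .inl (hl i),
    eval_neg_conePoly hH' hb hcolor, ← mul_assoc, ← mul_pow]
  simp

theorem exists_mvPolynomial_ncard_hull_eq_eval [Fintype ι]
    (hspan : Submodule.span ℝ (Set.range U) = ⊤)
    (hcolor : color.Surjective) (hH : ∀ u, H (U u) = Pi.single (color u) 1) (hU : ∀ u, U u ∈ Λ)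
    (hΛ : ∀ z ∈ Λ, ∀ i, ∃ m : ℤ, H z i = m) :
    ∃ F : MvPolynomial τ ℝ, F.totalDegree ≤ Module.finrank ℝ E - Fintype.card τ ∧
      (∀ l : τ → ℕ, ({z | z ∈ Λ ∧ z ∈ PointedCone.hull ℝ (Set.range U) ∧
        H z = fun i ↦ (l i : ℝ)}.ncard : ℝ) = MvPolynomial.eval (fun i ↦ (l i : ℝ)) F) ∧
      ∀ l : τ → ℕ, (∀ i, l i ≠ 0) →
        ({z | z ∈ Λ ∧ z ∈ openCone U ∧ H z = fun i ↦ (l i : ℝ)}.ncard : ℝ) =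
          (-1) ^ (Module.finrank ℝ E - Fintype.card τ) *
            MvPolynomial.eval (-fun i ↦ (l i : ℝ)) F := by
  obtain ⟨w, hw⟩ := exists_isGenericWeight U
  obtain ⟨a, ha, hs⟩ := exists_pos_isGenericVector_sum hspan
  set s := ∑ u, a u • U u
  have hpos : s ∈ openCone U := ⟨a, ha, rfl⟩
  have hη : ∀ u, 0 < ((∑ i, LinearMap.proj i) ∘ₗ H) (U u) := fun u ↦ by simp [hH]
  choose F hdeg hF hF' using fun B : {B // IsLowerBasis U w B} ↦
    exists_mvPolynomial_ncard_cell_eq_eval B.2 hH hU hΛ hs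
      (height_pos_of_mem_openCone hcolor hH hpos)
  refine ⟨∑ᶠ B, F B, ?_, fun l ↦ ?_, fun l hl ↦ ?_⟩
  · have := Fintype.ofFinite {B // IsLowerBasis U w B}
    rw [finsum_eq_sum_of_fintype]
    exact MvPolynomial.totalDegree_finsetSum_le fun B _ ↦ hdeg B
  · simp_rw [← SetLike.mem_coe (A := PointedCone ℝ E), ← iUnion_cell_eq_hull hη hw hs hpos]
    rw [ncard_sep_iUnion_cell hH hU hs, map_finsum _ (Set.toFinite _)]
    exact finsum_congr fun B ↦ hF B l
  · rw [← iUnion_cell_neg_eq_openCone hη hw hs hpos, ncard_sep_iUnion_cell hH hU hs.neg,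
      map_finsum _ (Set.toFinite _), mul_finsum]
    exact finsum_congr fun B ↦ hF' B l hl

end GradedCones

section IntegerLattice

/-- The lattice `ℤ^τ` in `τ → ℝ`. -/
noncomputable def integerLattice (τ : Type*) [Finite τ] : AddSubgroup (τ → ℝ) :=
  (Submodule.span ℤ (Set.range (Pi.basisFun ℝ τ))).toAddSubgroup

theorem mem_integerLattice {τ : Type*} [Finite τ] {x : τ → ℝ} :
    x ∈ integerLattice τ ↔ ∀ i, ∃ m : ℤ, x i = m := by
  have := Fintype.ofFinite τ
  simp [integerLattice, Module.Basis.mem_span_iff_repr_mem, eq_comm]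

instance {τ : Type*} [Finite τ] : DiscreteTopology (integerLattice τ) := by
  have := Fintype.ofFinite τ
  exact inferInstanceAs (DiscreteTopology (Submodule.span ℤ (Set.range (Pi.basisFun ℝ τ))))

theorem discreteTopology_addSubgroup_prod {E F : Type*} [AddGroup E] [TopologicalSpace E]
    [AddGroup F] [TopologicalSpace F] (Λ : AddSubgroup E) (Λ' : AddSubgroup F)
    [DiscreteTopology Λ] [DiscreteTopology Λ'] : DiscreteTopology (Λ.prod Λ') := by
  have hcont : Continuous (Λ.prodEquiv Λ') :=
    .prodMk (.subtype_mk (by fun_prop) _) (.subtype_mk (by fun_prop) _)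
  exact .of_continuous_injective hcont (Λ.prodEquiv Λ').injective

end IntegerLattice

section Cayley

variable {τ E : Type*}

theorem mem_smul_convexHull_iff [AddCommGroup E] [Module ℝ E] {V : Finset E} (hV : V.Nonempty)
    {r : ℝ} (hr : 0 ≤ r) {x : E} :
    x ∈ r • convexHull ℝ (V : Set E) ↔
      ∃ c : V → ℝ, (∀ v, 0 ≤ c v) ∧ ∑ v, c v = r ∧ ∑ v, c v • (v : E) = x := by
  constructor
  · rintro ⟨y, hy, rfl⟩
    obtain ⟨c, hc, hsum, rfl⟩ := mem_convexHull'.1 hy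
    refine ⟨fun v ↦ r * c v, fun v ↦ mul_nonneg hr (hc v v.2), ?_, ?_⟩
    · rw [← mul_sum, sum_coe_sort V c, hsum, mul_one]
    · rw [sum_coe_sort V fun v ↦ (r * c v) • v]
      simp [mul_smul, smul_sum]
  · rintro ⟨c, hc, rfl, rfl⟩
    obtain hr | hr := hr.eq_or_lt
    · have hzero : ∀ v, c v = 0 := by simpa [sum_eq_zero_iff_of_nonneg, hc] using hr.symm
      simp [hzero, Set.zero_smul_set (hV.to_set.convexHull (𝕜 := ℝ))]
    · refine (Set.mem_smul_set_iff_inv_smul_mem₀ hr.ne' _ _).2 ?_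
      rw [smul_sum]
      simp_rw [smul_smul]
      refine (convex_convexHull ℝ _).sum_mem (fun v _ ↦ mul_nonneg (inv_nonneg.2 hr.le) (hc v)) ?_
        fun v _ ↦ subset_convexHull ℝ _ v.2
      rw [← mul_sum, inv_mul_cancel₀ hr.ne']

variable [DecidableEq τ]

/-- The Cayley embedding of a family of finite point sets: a point `v ∈ V i` is lifted to
`(eᵢ, v)`. The cone over the lifted points has the weighted Minkowski sums of the polytopes
`conv (V i)` as slices. -/
def cayleyVec (V : τ → Finset E) (u : Σ i, V i) : (τ → ℝ) × E := (Pi.single u.1 1, u.2)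

theorem sum_smul_cayleyVec [Fintype τ] [AddCommGroup E] [Module ℝ E] (V : τ → Finset E)
    (c : (Σ i, V i) → ℝ) :
    ∑ u, c u • cayleyVec V u = (fun i ↦ ∑ v, c ⟨i, v⟩, ∑ i, ∑ v, c ⟨i, v⟩ • (v : E)) := by
  ext i
  · simp [cayleyVec, Prod.fst_sum, Fintype.sum_sigma, Pi.single_apply]
  · simp [cayleyVec, Prod.snd_sum, Fintype.sum_sigma]

theorem mk_mem_hull_range_cayleyVec_iff [Fintype τ] [AddCommGroup E] [Module ℝ E]
    {V : τ → Finset E} (hV : ∀ i, (V i).Nonempty) {l : τ → ℝ} (hl : ∀ i, 0 ≤ l i) {x : E} :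
    (l, x) ∈ PointedCone.hull ℝ (Set.range (cayleyVec V)) ↔
      x ∈ ∑ i, l i • convexHull ℝ (V i : Set E) := by
  simp_rw [mem_hull_range_iff, sum_smul_cayleyVec, Set.mem_fintype_sum,
    mem_smul_convexHull_iff (hV _) (hl _), Prod.mk.injEq]
  constructor
  · rintro ⟨c, hc, rfl, rfl⟩
    exact ⟨fun i ↦ ∑ v, c ⟨i, v⟩ • (v : E), fun i ↦ ⟨fun v ↦ c ⟨i, v⟩, fun v ↦ hc _, rfl, rfl⟩, rfl⟩
  · rintro ⟨g, hg, rfl⟩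
    choose c hc hsum hg using hg
    exact ⟨fun u ↦ c u.1 u.2, fun u ↦ hc _ _, funext hsum, sum_congr rfl fun i _ ↦ hg i⟩

theorem span_range_cayleyVec [Finite τ] [AddCommGroup E] [Module ℝ E] {V : τ → Finset E}
    (hV : ∀ i, (V i).Nonempty) (hspan : ⨆ i, vectorSpan ℝ (V i : Set E) = ⊤) :
    Submodule.span ℝ (Set.range (cayleyVec V)) = ⊤ := by
  have := Fintype.ofFinite τ
  set S := Submodule.span ℝ (Set.range (cayleyVec V))
  have hmem : ∀ i (v : V i), cayleyVec V ⟨i, v⟩ ∈ S := fun i v ↦ Submodule.subset_span ⟨_, rfl⟩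
  have hinr : ∀ x : E, (0, x) ∈ S := by
    suffices ⨆ i, vectorSpan ℝ (V i : Set E) ≤ S.comap (LinearMap.inr ℝ (τ → ℝ) E) from
      fun x ↦ this (hspan ▸ Submodule.mem_top)
    refine iSup_le fun i ↦ Submodule.span_le.2 ?_
    rintro _ ⟨v, hv, v', hv', rfl⟩
    simpa [cayleyVec] using S.sub_mem (hmem i ⟨v, hv⟩) (hmem i ⟨v', hv'⟩)
  choose v hv using hV
  refine eq_top_iff.2 fun z _ ↦ ?_
  have hsum : ∑ i, z.1 i • cayleyVec V ⟨i, v i, hv i⟩ ∈ S :=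
    S.sum_mem fun i _ ↦ S.smul_mem _ (hmem i _)
  convert S.add_mem hsum (hinr (z.2 - ∑ i, z.1 i • v i)) using 1
  ext i
  · simp [cayleyVec, Prod.fst_sum, Pi.single_apply]
  · simp [cayleyVec, Prod.snd_sum]

end Cayley

section CayleyEhrhart

variable {τ E : Type*} [NormedAddCommGroup E] [NormedSpace ℝ E] {Λ : AddSubgroup E}

theorem ncard_slice_integerLattice_prod [Finite τ] (C : Set ((τ → ℝ) × E)) (l : τ → ℕ) :
    {x | x ∈ Λ ∧ (fun i ↦ (l i : ℝ), x) ∈ C}.ncard =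
      {z | z ∈ (integerLattice τ).prod Λ ∧ z ∈ C ∧
        LinearMap.fst ℝ (τ → ℝ) E z = fun i ↦ (l i : ℝ)}.ncard := by
  rw [← Set.ncard_image_of_injective _ (Prod.mk_right_injective fun i ↦ (l i : ℝ))]
  congr 1
  ext ⟨y, x⟩
  constructor
  · rintro ⟨x, ⟨hx, hC⟩, h⟩
    obtain ⟨rfl, rfl⟩ := Prod.mk.inj h
    exact ⟨⟨mem_integerLattice.2 fun i ↦ ⟨l i, by simp⟩, hx⟩, hC, rfl⟩
  · rintro ⟨⟨-, hx⟩, hC, rfl⟩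
    exact ⟨x, ⟨hx, hC⟩, rfl⟩

theorem exists_mvPolynomial_ncard_cayley_eq_eval [Fintype τ] [DecidableEq τ] [DiscreteTopology Λ]
    [FiniteDimensional ℝ E]
    {V : τ → Finset E} (hV : ∀ i, (V i).Nonempty) (hVΛ : ∀ i, ∀ v ∈ V i, v ∈ Λ)
    (hspan : ⨆ i, vectorSpan ℝ (V i : Set E) = ⊤) :
    ∃ F : MvPolynomial τ ℝ, F.totalDegree ≤ Module.finrank ℝ E ∧
      (∀ l : τ → ℕ, ({x | x ∈ Λ ∧ x ∈ ∑ i, (l i : ℝ) • convexHull ℝ (V i : Set E)}.ncard : ℝ) =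
        MvPolynomial.eval (fun i ↦ (l i : ℝ)) F) ∧
      ∀ l : τ → ℕ, (∀ i, l i ≠ 0) →
        ({x | x ∈ Λ ∧ (fun i ↦ (l i : ℝ), x) ∈ openCone (cayleyVec V)}.ncard : ℝ) =
          (-1) ^ Module.finrank ℝ E * MvPolynomial.eval (-fun i ↦ (l i : ℝ)) F := by
  have := discreteTopology_addSubgroup_prod (integerLattice τ) Λ
  have hmem : ∀ u, cayleyVec V u ∈ (integerLattice τ).prod Λ := fun u ↦
    ⟨mem_integerLattice.2 fun i ↦ ⟨(Pi.single u.1 1 : τ → ℤ) i, by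
      simp [cayleyVec, Pi.single_apply, apply_ite]⟩, hVΛ _ _ u.2.2⟩
  obtain ⟨F, hdeg, hF, hF'⟩ := exists_mvPolynomial_ncard_hull_eq_eval
    (H := LinearMap.fst ℝ (τ → ℝ) E) (span_range_cayleyVec hV hspan)
    (fun i ↦ ⟨⟨i, _, (hV i).choose_spec⟩, rfl⟩) (fun u ↦ rfl) hmem
    fun z hz ↦ mem_integerLattice.1 hz.1
  have hfinrank : Module.finrank ℝ ((τ → ℝ) × E) - Fintype.card τ = Module.finrank ℝ E := by simp
  rw [hfinrank] at hdeg hF'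
  refine ⟨F, hdeg, fun l ↦ ?_, fun l hl ↦ ?_⟩
  · simp_rw [← hF, ← mk_mem_hull_range_cayleyVec_iff hV fun i ↦ Nat.cast_nonneg (l i),
      ← SetLike.mem_coe (A := PointedCone ℝ ((τ → ℝ) × E)), ← ncard_slice_integerLattice_prod]
  · rw [← hF' l hl, ← ncard_slice_integerLattice_prod]

end CayleyEhrhart

section EhrhartMacdonald

theorem eval_aeval_polynomial {R τ : Type*} [CommSemiring R] (g : τ → Polynomial R)
    (F : MvPolynomial τ R) (r : R) :
    (MvPolynomial.aeval g F).eval r = MvPolynomial.eval (fun i ↦ (g i).eval r) F := by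
  rw [MvPolynomial.aeval_def, MvPolynomial.polynomial_eval_eval₂, MvPolynomial.eval₂_eq,
    MvPolynomial.eval_eq]
  simp

variable {E : Type*} [NormedAddCommGroup E] [NormedSpace ℝ E] {V : Finset E}

theorem exists_pos_sum_smul_eq_of_mem_interior {x : E}
    (hx : x ∈ interior (convexHull ℝ (V : Set E))) :
    ∃ c : V → ℝ, (∀ v, 0 < c v) ∧ ∑ v, c v = 1 ∧ ∑ v, c v • (v : E) = x := by
  have hV : V.Nonempty := coe_nonempty.1 (convexHull_nonempty_iff.1 ⟨x, interior_subset hx⟩)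
  set S : E := ∑ v : V, (v : E)
  set N : ℝ := (#V : ℝ)
  have htendsto : Tendsto (fun t : ℝ ↦ x + t • (N • x - S)) (𝓝[>] 0) (𝓝 x) :=
    tendsto_nhdsWithin_of_tendsto_nhds (Continuous.tendsto' (by fun_prop) _ _ (by simp))
  obtain ⟨t, htx, ht⟩ :=
    ((htendsto.eventually_mem (mem_interior_iff_mem_nhds.1 hx)).and self_mem_nhdsWithin).exists
  obtain ⟨c, hc, hsum, hcx⟩ := (mem_smul_convexHull_iff hV zero_le_one).1 (by simpa using htx)
  have ht : 0 < t := ht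
  have hN : 0 < 1 + t * N := by positivity
  refine ⟨fun v ↦ (1 + t * N)⁻¹ * (c v + t), fun v ↦ mul_pos (inv_pos.2 hN)
    (add_pos_of_nonneg_of_pos (hc v) ht), ?_, ?_⟩
  · rw [← mul_sum, sum_add_distrib, hsum, inv_mul_eq_one₀ hN.ne']
    simp [N, mul_comm]
  · simp_rw [mul_smul, ← smul_sum, add_smul, sum_add_distrib, ← smul_sum, hcx]
    rw [inv_smul_eq_iff₀ hN.ne']
    module

theorem mem_interior_convexHull_of_sum_smul_eq
    (hint : (interior (convexHull ℝ (V : Set E))).Nonempty) {c : V → ℝ} (hc : ∀ v, 0 < c v)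
    (hsum : ∑ v, c v = 1) : ∑ v, c v • (v : E) ∈ interior (convexHull ℝ (V : Set E)) := by
  obtain ⟨q, hq⟩ := hint
  have hV : V.Nonempty := coe_nonempty.1 (convexHull_nonempty_iff.1 ⟨q, interior_subset hq⟩)
  obtain ⟨d, -, hdsum, rfl⟩ :=
    (mem_smul_convexHull_iff hV zero_le_one).1 (by simpa using interior_subset hq)
  have hnonneg : ∀ᶠ t : ℝ in 𝓝[>] 0, ∀ v, 0 ≤ (c + t • -d) v :=
    eventually_forall_nonneg_add_smul (fun v ↦ (hc v).le) fun v hv ↦ absurd hv (hc v).ne'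
  obtain ⟨t, hcd, ht⟩ := (hnonneg.and (Ioo_mem_nhdsGT one_pos)).exists
  obtain ⟨y, hy, (hyx : (1 - t) • y = _)⟩ := (mem_smul_convexHull_iff hV (sub_nonneg.2 ht.2.le)).2
    ⟨c + t • -d, hcd, by
      simp [sum_add_distrib, ← mul_sum, hsum, hdsum, sub_eq_add_neg, -univ_eq_attach], rfl⟩
  convert (convex_convexHull ℝ _).combo_interior_self_mem_interior hq hy ht.1
    (sub_nonneg.2 ht.2.le) (add_sub_cancel _ _) using 1
  rw [hyx]
  simp [add_smul, sum_add_distrib, smul_sum, mul_smul]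

theorem mk_one_mem_openCone_cayleyVec_iff (hint : (interior (convexHull ℝ (V : Set E))).Nonempty)
    {x : E} : (fun _ ↦ 1, x) ∈ openCone (cayleyVec fun _ : Unit ↦ V) ↔
      x ∈ interior (convexHull ℝ (V : Set E)) := by
  constructor
  · rintro ⟨c, hc, h⟩
    rw [sum_smul_cayleyVec, Prod.mk.injEq] at h
    obtain ⟨hsum, rfl⟩ := h
    simpa using mem_interior_convexHull_of_sum_smul_eq hint (fun v ↦ hc ⟨(), v⟩) (congrFun hsum ())
  · intro hx
    obtain ⟨c, hc, hsum, rfl⟩ := exists_pos_sum_smul_eq_of_mem_interior hx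
    exact ⟨fun u ↦ c u.2, fun u ↦ hc _, by simp [sum_smul_cayleyVec, hsum, -univ_eq_attach]⟩

theorem exists_polynomial_ncard_smul_eq_eval [FiniteDimensional ℝ E] {Λ : AddSubgroup E}
    [DiscreteTopology Λ] (hVΛ : ∀ v ∈ V, v ∈ Λ)
    (hint : (interior (convexHull ℝ (V : Set E))).Nonempty) :
    ∃ f : Polynomial ℝ,
      (∀ k : ℕ, ({x | x ∈ Λ ∧ x ∈ (k : ℝ) • convexHull ℝ (V : Set E)}.ncard : ℝ) = f.eval ↑k) ∧
      ({x | x ∈ Λ ∧ x ∈ interior (convexHull ℝ (V : Set E))}.ncard : ℝ) =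
        (-1) ^ Module.finrank ℝ E * f.eval (-1) := by
  have hV : V.Nonempty := by simpa using hint.mono interior_subset
  have hspan : ⨆ _ : Unit, vectorSpan ℝ (V : Set E) = ⊤ := by
    rw [iSup_unique]
    exact AffineSubspace.vectorSpan_eq_top_of_affineSpan_eq_top ℝ _ _
      (interior_convexHull_nonempty_iff_affineSpan_eq_top.1 hint)
  obtain ⟨F, -, hF, hF'⟩ :=
    exists_mvPolynomial_ncard_cayley_eq_eval (fun _ : Unit ↦ hV) (fun _ ↦ hVΛ) hspan
  refine ⟨MvPolynomial.aeval (fun _ ↦ Polynomial.X) F, fun k ↦ ?_, ?_⟩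
  · simpa [eval_aeval_polynomial] using hF fun _ ↦ k
  · rw [eval_aeval_polynomial]
    simpa [mk_one_mem_openCone_cayleyVec_iff hint, Pi.neg_def] using hF' 1 (by simp)

end EhrhartMacdonald

section LatticePolytopes

variable {n : ℕ}

theorem mem_integerLattice_iff_isLatticePt {x : Fin n → ℝ} :
    x ∈ integerLattice (Fin n) ↔ IsLatticePt x :=
  mem_integerLattice

theorem IsLatticePolytope.add {P Q : Set (Fin n → ℝ)} (hP : IsLatticePolytope P)
    (hQ : IsLatticePolytope Q) : IsLatticePolytope (P + Q) := by
  obtain ⟨V, hV, hVlat, rfl⟩ := hP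
  obtain ⟨W, hW, hWlat, rfl⟩ := hQ
  refine ⟨V + W, hV.add hW, fun u hu ↦ ?_, by rw [coe_add, convexHull_add]⟩
  obtain ⟨v, hv, w, hw, rfl⟩ := mem_add.1 hu
  simp_rw [← mem_integerLattice_iff_isLatticePt] at hVlat hWlat ⊢
  exact add_mem (hVlat v hv) (hWlat w hw)

theorem IsLatticePolytope.sum {ι : Type*} {P : ι → Set (Fin n → ℝ)} {I : Finset ι}
    (hP : ∀ i ∈ I, IsLatticePolytope (P i)) : IsLatticePolytope (∑ i ∈ I, P i) :=
  sum_induction P IsLatticePolytope (fun _ _ ↦ .add)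
    ⟨{0}, singleton_nonempty 0, by simp [← mem_integerLattice_iff_isLatticePt],
      by simp [Set.singleton_zero]⟩ hP

theorem IsLatticePolytope.nonempty {P : Set (Fin n → ℝ)} (hP : IsLatticePolytope P) :
    P.Nonempty := by
  obtain ⟨V, hV, -, rfl⟩ := hP
  exact hV.to_set.convexHull

theorem vectorSpan_eq_top_of_adim_eq {P : Set (Fin n → ℝ)} (hP : adim P = n) :
    vectorSpan ℝ P = ⊤ := by
  rw [← direction_affineSpan]
  exact Submodule.eq_top_of_finrank_eq (by simpa [adim] using hP)

theorem IsLatticePolytope.interior_nonempty {P : Set (Fin n → ℝ)} (hP : IsLatticePolytope P)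
    (hdim : adim P = n) : (interior P).Nonempty := by
  obtain ⟨V, hV, -, rfl⟩ := hP
  rw [interior_convexHull_nonempty_iff_affineSpan_eq_top, ← affineSpan_convexHull,
    AffineSubspace.affineSpan_eq_top_iff_vectorSpan_eq_top_of_nonempty _ _ _ hV.to_set.convexHull]
  exact vectorSpan_eq_top_of_adim_eq hdim

theorem interior_sum_nonempty {ι E : Type*} [TopologicalSpace E] [AddCommGroup E]
    [ContinuousAdd E] {P : ι → Set E} {I : Finset ι} (hI : I.Nonempty)
    (hP : ∀ i ∈ I, (interior (P i)).Nonempty) :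
    (interior (∑ i ∈ I, P i)).Nonempty := by
  classical
  obtain ⟨i, hi⟩ := hI
  choose! x hx using fun j hj ↦ (hP j hj).mono interior_subset
  rw [← add_sum_erase _ _ hi]
  refine ((hP i hi).add ⟨∑ j ∈ I.erase i, x j, ?_⟩).mono subset_interior_add_left
  exact Set.finsetSum_mem_finsetSum _ _ _ fun j hj ↦ hx j (mem_of_mem_erase hj)

theorem setOf_mem_integerLattice_smul_eq_image {τ : Type*} [Finite τ] {r : ℝ} (hr : r ≠ 0)
    (s : Set (τ → ℝ)) :
    {x | x ∈ integerLattice τ ∧ x ∈ r • s} =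
      (r • ·) '' (s ∩ r⁻¹ • (integerLattice τ : Set (τ → ℝ))) := by
  ext x
  simp [Set.image_smul, Set.smul_set_inter₀ hr, smul_inv_smul₀ hr, and_comm]

theorem tendsto_ncard_smul_div_pow_atTop_volume {τ : Type*} [Fintype τ] {s : Set (τ → ℝ)}
    (hs : Bornology.IsBounded s) (hmeas : MeasurableSet s) (hfrontier : volume (frontier s) = 0) :
    Tendsto (fun k : ℕ ↦ ({x | x ∈ integerLattice τ ∧ x ∈ (k : ℝ) • s}.ncard : ℝ) /
      (k : ℝ) ^ Fintype.card τ) atTop (𝓝 (volume.real s)) := by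
  refine (tendsto_card_div_pow_atTop_volume s hs hmeas hfrontier).congr' ?_
  filter_upwards [eventually_ne_atTop 0] with k hk
  have hk' : (k : ℝ) ≠ 0 := Nat.cast_ne_zero.2 hk
  rw [setOf_mem_integerLattice_smul_eq_image hk',
    Set.ncard_image_of_injective _ (smul_right_injective (τ → ℝ) hk'), ← Nat.card_coe_set_eq]
  rfl

theorem IsLatticePolytope.tendsto_ncard_smul_div_pow {P : Set (Fin n → ℝ)}
    (hP : IsLatticePolytope P) :
    Tendsto (fun k : ℕ ↦ ({x | x ∈ integerLattice (Fin n) ∧ x ∈ (k : ℝ) • P}.ncard : ℝ) /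
      (k : ℝ) ^ n) atTop (𝓝 (volume P).toReal) := by
  obtain ⟨V, -, -, rfl⟩ := hP
  have hcompact := V.finite_toSet.isCompact_convexHull (𝕜 := ℝ)
  simpa [Measure.real] using tendsto_ncard_smul_div_pow_atTop_volume hcompact.isBounded
    hcompact.measurableSet ((convex_convexHull ℝ (V : Set (Fin n → ℝ))).addHaar_frontier volume)

end LatticePolytopes

section InclusionExclusion

variable {τ R : Type*} [Fintype τ] [CommRing R]

theorem sum_neg_one_pow_mul_prod_ite [DecidableEq τ] (f g : τ → R) :
    ∑ I : Finset τ, (-1) ^ (Fintype.card τ - #I) * ∏ i, (if i ∈ I then f i else g i) =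
      ∏ i, (f i - g i) := by
  simp_rw [sub_eq_add_neg, Fintype.prod_add, prod_neg, card_compl, prod_ite, filter_univ_mem,
    filter_notMem_eq_sdiff, ← compl_eq_univ_sdiff]
  exact sum_congr rfl fun I _ ↦ by ring

theorem prod_pow_sub_zero_pow {d : τ → ℕ} (hd : ∑ i, d i ≤ Fintype.card τ) (s : R) :
    ∏ i, (s ^ d i - 0 ^ d i) = if d = 1 then s ^ Fintype.card τ else 0 := by
  split_ifs with h
  · simp [h]
  · obtain ⟨i, hi⟩ : ∃ i, d i = 0 := by
      by_contra! hpos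
      have hone : ∀ i ∈ univ, 1 ≤ d i := fun i _ ↦ Nat.one_le_iff_ne_zero.2 (hpos i)
      have hsum := (sum_le_sum hone).antisymm (by simpa using hd)
      exact h (funext fun i ↦ ((sum_eq_sum_iff_of_le hone).1 hsum i (mem_univ i)).symm)
    exact prod_eq_zero (mem_univ i) (by simp [hi])

theorem sum_neg_one_pow_mul_eval_ite [DecidableEq τ] {F : MvPolynomial τ R}
    (hF : F.totalDegree ≤ Fintype.card τ) (s : R) :
    ∑ I : Finset τ, (-1) ^ (Fintype.card τ - #I) *
      MvPolynomial.eval (fun i ↦ if i ∈ I then s else 0) F =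
        s ^ Fintype.card τ * F.coeff (Finsupp.equivFunOnFinite.symm 1) := by
  have hmonomial : ∀ d ∈ F.support, ∑ I : Finset τ, (-1) ^ (Fintype.card τ - #I) *
      ∏ i, (if i ∈ I then s else 0) ^ d i =
        if d = Finsupp.equivFunOnFinite.symm 1 then s ^ Fintype.card τ else 0 := by
    intro d hd
    have hdeg : ∑ i, d i ≤ Fintype.card τ := by
      rw [← Finsupp.sum_fintype d (fun _ a ↦ a) fun _ ↦ rfl]
      exact (MvPolynomial.le_totalDegree hd).trans hF
    simp_rw [ite_pow, sum_neg_one_pow_mul_prod_ite, prod_pow_sub_zero_pow hdeg]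
    exact if_congr Finsupp.equivFunOnFinite.eq_symm_apply.symm rfl rfl
  simp_rw [MvPolynomial.eval_eq', mul_sum, mul_left_comm]
  rw [sum_comm]
  simp_rw [← mul_sum]
  rw [sum_congr rfl fun d hd ↦ congrArg _ (hmonomial d hd)]
  simp_rw [mul_ite, mul_zero, sum_ite_eq']
  split_ifs with h
  · rw [mul_comm]
  · rw [MvPolynomial.notMem_support_iff.1 h, mul_zero]

end InclusionExclusion

section EhrhartPolynomial

variable {n : ℕ}

/-- `F` is the multivariate Ehrhart polynomial of the family `P`: it counts the lattice points of
the weighted Minkowski sums `∑ i, l i • P i` for natural weights `l`. -/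
def IsEhrhartPolynomial {τ : Type*} [Fintype τ] (P : τ → Set (Fin n → ℝ))
    (F : MvPolynomial τ ℝ) : Prop :=
  ∀ l : τ → ℕ, ({x | x ∈ integerLattice (Fin n) ∧ x ∈ ∑ i, (l i : ℝ) • P i}.ncard : ℝ) =
    MvPolynomial.eval (fun i ↦ (l i : ℝ)) F

theorem exists_isEhrhartPolynomial {τ : Type*} [Fintype τ] {P : τ → Set (Fin n → ℝ)}
    (hP : ∀ i, IsLatticePolytope (P i)) (hspan : ⨆ i, vectorSpan ℝ (P i) = ⊤) :
    ∃ F : MvPolynomial τ ℝ, F.totalDegree ≤ n ∧ IsEhrhartPolynomial P F := by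
  classical
  choose V hV hVlat hPV using hP
  obtain rfl := funext hPV
  simp_rw [← direction_affineSpan, affineSpan_convexHull, direction_affineSpan] at hspan
  obtain ⟨F, hdeg, hF, -⟩ := exists_mvPolynomial_ncard_cayley_eq_eval hV
    (fun i v hv ↦ mem_integerLattice_iff_isLatticePt.2 (hVlat i v hv)) hspan
  exact ⟨F, by simpa using hdeg, hF⟩

namespace IsEhrhartPolynomial

variable {τ : Type*} [Fintype τ] {P : τ → Set (Fin n → ℝ)} {F : MvPolynomial τ ℝ}

theorem constantCoeff_eq_one (hF : IsEhrhartPolynomial P F) (hP : ∀ i, (P i).Nonempty) :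
    MvPolynomial.constantCoeff F = 1 := by
  have hzero : {x | x ∈ integerLattice (Fin n) ∧ x = 0} = {0} := by
    ext x
    simp +contextual [zero_mem]
  have hcount := hF 0
  simp_rw [Pi.zero_apply, Nat.cast_zero, Set.zero_smul_set (hP _), sum_const_zero, Set.mem_zero,
    hzero, Set.ncard_singleton, Nat.cast_one] at hcount
  rw [hcount, ← MvPolynomial.eval_zero]
  rfl

variable [DecidableEq τ]

theorem ncard_smul_sum (hF : IsEhrhartPolynomial P F) (hP : ∀ i, (P i).Nonempty) (I : Finset τ)
    (k : ℕ) :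
    ({x | x ∈ integerLattice (Fin n) ∧ x ∈ (k : ℝ) • ∑ i ∈ I, P i}.ncard : ℝ) =
      MvPolynomial.eval (fun i ↦ if i ∈ I then (k : ℝ) else 0) F := by
  simpa [ite_smul, Set.zero_smul_set (hP _), sum_ite_mem, ← smul_sum, apply_ite] using
    hF fun i ↦ if i ∈ I then k else 0

theorem ncard_intLat_sum (hF : IsEhrhartPolynomial P F) (hP : ∀ i, IsLatticePolytope (P i))
    {I : Finset τ} (hint : (interior (∑ i ∈ I, P i)).Nonempty) :
    ((intLat (∑ i ∈ I, P i)).ncard : ℝ) =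
      (-1) ^ n * MvPolynomial.eval (fun i ↦ if i ∈ I then -1 else 0) F := by
  obtain ⟨V, -, hVlat, hV⟩ := IsLatticePolytope.sum fun i (_ : i ∈ I) ↦ hP i
  obtain ⟨f, hf, hf'⟩ := exists_polynomial_ncard_smul_eq_eval (V := V)
    (fun v hv ↦ mem_integerLattice_iff_isLatticePt.2 (hVlat v hv)) (hV ▸ hint)
  have hfF : f = MvPolynomial.aeval (fun i ↦ if i ∈ I then Polynomial.X else 0) F := by
    refine Polynomial.eq_of_infinite_eval_eq _ _ <|
      (Set.infinite_range_of_injective (Nat.cast_injective (R := ℝ))).mono ?_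
    rintro _ ⟨k, rfl⟩
    have hk := hF.ncard_smul_sum (fun i ↦ (hP i).nonempty) I k
    rw [hV, hf] at hk
    simpa [eval_aeval_polynomial, apply_ite] using hk
  rw [← hV, hfF, eval_aeval_polynomial] at hf'
  simpa [intLat, ← mem_integerLattice_iff_isLatticePt, and_comm, apply_ite] using hf'

theorem mixedVol_eq_coeff {P : Fin n → Set (Fin n → ℝ)} {F : MvPolynomial (Fin n) ℝ}
    (hF : IsEhrhartPolynomial P F) (hdeg : F.totalDegree ≤ n)
    (hP : ∀ i, IsLatticePolytope (P i)) :
    mixedVol P = F.coeff (Finsupp.equivFunOnFinite.symm 1) := by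
  have hlim : Tendsto (fun k : ℕ ↦ ∑ I : Finset (Fin n), (-1 : ℝ) ^ (n - #I) *
      (({x | x ∈ integerLattice (Fin n) ∧ x ∈ (k : ℝ) • ∑ i ∈ I, P i}.ncard : ℝ) / (k : ℝ) ^ n))
      atTop (𝓝 (mixedVol P)) :=
    tendsto_finsetSum _ fun I _ ↦
      (IsLatticePolytope.sum fun i _ ↦ hP i).tendsto_ncard_smul_div_pow.const_mul _
  refine tendsto_nhds_unique hlim (tendsto_const_nhds.congr' ?_)
  filter_upwards [eventually_ne_atTop 0] with k hk
  have hdiff := sum_neg_one_pow_mul_eval_ite (hdeg.trans_eq (Fintype.card_fin n).symm) (k : ℝ)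
  rw [Fintype.card_fin] at hdiff
  simp_rw [hF.ncard_smul_sum fun i ↦ (hP i).nonempty, ← mul_div_assoc, ← sum_div, hdiff]
  rw [mul_div_cancel_left₀ _ (pow_ne_zero n (Nat.cast_ne_zero.2 hk))]

theorem mixedVol_eq_sum_eval_neg {P : Fin n → Set (Fin n → ℝ)} {F : MvPolynomial (Fin n) ℝ}
    (hF : IsEhrhartPolynomial P F) (hdeg : F.totalDegree ≤ n)
    (hP : ∀ i, IsLatticePolytope (P i)) :
    mixedVol P = ∑ I : Finset (Fin n), (-1 : ℝ) ^ (n - #I) *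
      ((-1) ^ n * MvPolynomial.eval (fun i ↦ if i ∈ I then -1 else 0) F) := by
  have hsum := sum_neg_one_pow_mul_eval_ite (hdeg.trans_eq (Fintype.card_fin n).symm) (-1 : ℝ)
  rw [Fintype.card_fin] at hsum
  simp_rw [mul_left_comm _ ((-1 : ℝ) ^ n), ← mul_sum, hsum, hF.mixedVol_eq_coeff hdeg hP,
    ← mul_assoc, ← mul_pow]
  simp

end IsEhrhartPolynomial

end EhrhartPolynomial

/-- interior lattice point formula for full-dimensional families. -/
theorem mixedVol_eq_one_add_alternating_sum_int_lattice_points {n : ℕ}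
    (P : Fin n → Set (Fin n → ℝ)) (hP : ∀ i, IsLatticePolytope (P i))
    (hdim : ∀ i, adim (P i) = n) :
    mixedVol P =
      1 + ∑ I ∈ (Finset.univ : Finset (Fin n)).powerset.filter (·.Nonempty),
        (-1 : ℝ) ^ (n - I.card) * (intLat (∑ i ∈ I, P i)).ncard := by
  have hspan : ⨆ i, vectorSpan ℝ (P i) = ⊤ := by
    rcases isEmpty_or_nonempty (Fin n) with hn | hn
    · exact Subsingleton.elim _ _
    · simp [vectorSpan_eq_top_of_adim_eq (hdim _)]
  obtain ⟨F, hdeg, hF⟩ := exists_isEhrhartPolynomial hP hspan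
  have hrecip : ∀ I : Finset (Fin n), I.Nonempty → ((intLat (∑ i ∈ I, P i)).ncard : ℝ) =
      (-1) ^ n * MvPolynomial.eval (fun i ↦ if i ∈ I then -1 else 0) F := fun I hI ↦
    hF.ncard_intLat_sum hP (interior_sum_nonempty hI fun i _ ↦ (hP i).interior_nonempty (hdim i))
  have hfilter : univ.powerset.filter (·.Nonempty) = univ.erase (∅ : Finset (Fin n)) := by
    ext I
    simp [nonempty_iff_ne_empty]
  rw [hF.mixedVol_eq_sum_eval_neg hdeg hP, hfilter, ← add_sum_erase _ _ (mem_univ ∅)]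
  congr 1
  · have hconst := hF.constantCoeff_eq_one fun i ↦ (hP i).nonempty
    simp [MvPolynomial.eval_zero', hconst, ← mul_pow]
  · refine sum_congr rfl fun I hI ↦ ?_
    rw [hrecip I (nonempty_iff_ne_empty.2 (ne_of_mem_erase hI))]
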